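/- arXiv:1907.07376 — 2 statements merged into one kernel-verified Lean document; each statement's English description precedes it below -/
import Mathlib

section
/- Let G = (V,E) be a connected loopless multigraph whose vertex set is partitioned into nonempty cliques V_1, ..., V_k, and set M_0 = ∪_{1≤i<j≤k} E_G(V_i,V_j). Suppose M_0 is a matching of G. Let G* be the graph obtained from G by identifying all vertices of each V_i to a single vertex v_i (for i = 1,...,k) and removing all resulting loops. Then τ_G(M_0) = (∏_{i=1}^k |V_i|^{|V_i|-2}) · Σ_{T ∈ ST(G*)} ∏_{e ∈ M_0 − E(T)} ( |V_{a(e)}|^{-1} + |V_{b(e)}|^{-1} ), where for each edge e of G* the vertices v_{a(e)} and v_{b(e)} are its two ends in G* and ST(G*) denotes the set of spanning trees of G*. -/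
/-!
Spanning trees of multigraphs: common definitions.

A multigraph on a vertex type `V` with edge type `E` is given by an incidence
map `inc : E → Sym2 V` sending each edge to its (unordered) pair of endpoints.
-/

namespace PaperST

universe u v

/-- A multigraph on vertex type `V` with edge type `E`. -/
structure Multigraph (V : Type u) (E : Type v) where
  /-- the two (possibly equal) endpoints of each edge -/
  inc : E → Sym2 V

namespace Multigraph

variable {V : Type u} {E : Type v}

/-- One step along an edge of `T`. -/
def Step (G : Multigraph V E) (T : Set E) (u v : V) : Prop :=
  ∃ e ∈ T, G.inc e = s(u, v)

theorem step_symm (G : Multigraph V E) (T : Set E) : Symmetric (G.Step T) := by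
  rintro u v ⟨e, he, hinc⟩
  exact ⟨e, he, by rw [hinc]; exact Sym2.eq_swap⟩

/-- Reachability using only edges in `T`. -/
def Reach (G : Multigraph V E) (T : Set E) : V → V → Prop :=
  Relation.ReflTransGen (G.Step T)

/-- The spanning subgraph `G⟨T⟩` is connected. -/
def ConnectedOn (G : Multigraph V E) (T : Set E) : Prop :=
  ∀ u v : V, G.Reach T u v

/-- `G` is connected. -/
def Connected (G : Multigraph V E) : Prop :=
  G.ConnectedOn Set.univ

/-- `G` has no loops. -/
def Loopless (G : Multigraph V E) : Prop :=
  ∀ e : E, ¬ (G.inc e).IsDiag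

/-- A spanning tree of a (finite) multigraph: a connected spanning subgraph
with `|V| - 1` edges. -/
def IsSpanningTree (G : Multigraph V E) (T : Set E) : Prop :=
  G.ConnectedOn T ∧ T.ncard + 1 = Nat.card V

/-- The set `ST_G(M)` of spanning trees of `G` containing all edges of `M`. -/
def ST (G : Multigraph V E) (M : Set E) : Set (Set E) :=
  {T | G.IsSpanningTree T ∧ M ⊆ T}

/-- `τ_G(M)`: the number of spanning trees of `G` containing all edges of `M`. -/
noncomputable def tau (G : Multigraph V E) (M : Set E) : ℕ :=
  (G.ST M).ncard

/-- The spanning subgraph `G⟨W⟩` is a forest (no cycles): there are no loops in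
`W` and every edge of `W` is a bridge of `G⟨W⟩`. -/
def IsForest (G : Multigraph V E) (W : Set E) : Prop :=
  ∀ e ∈ W, ¬ (G.inc e).IsDiag ∧
    ∀ u v : V, G.inc e = s(u, v) → ¬ G.Reach (W \ {e}) u v

/-- Edges with all endpoints in `U`: the edge set of the induced subgraph `G[U]`. -/
def edgesWithin (G : Multigraph V E) (U : Set V) : Set E :=
  {e | ∀ v ∈ G.inc e, v ∈ U}

/-- `E_G(U₁, U₂)`: edges with one end in `U₁` and the other end in `U₂`. -/
def edgesBetween (G : Multigraph V E) (U₁ U₂ : Set V) : Set E :=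
  {e | ∃ u v, G.inc e = s(u, v) ∧ u ∈ U₁ ∧ v ∈ U₂}

/-- `E_G(U) = E_G(U, V − U)`: edges with one end in `U` and the other outside. -/
def edgeBoundary (G : Multigraph V E) (U : Set V) : Set E :=
  G.edgesBetween U Uᶜ

/-- `U` is a clique of `G`: the induced subgraph `G[U]` is a complete graph,
i.e. exactly one edge joins each pair of distinct vertices of `U`, and there
are neither loops nor parallel edges inside `U`. -/
def IsClique (G : Multigraph V E) (U : Set V) : Prop :=
  (∀ u ∈ U, ∀ v ∈ U, u ≠ v → ∃! e : E, G.inc e = s(u, v)) ∧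
    ∀ e ∈ G.edgesWithin U, ¬ (G.inc e).IsDiag

/-- The degree of a vertex: the number of edges incident with it. -/
noncomputable def degree (G : Multigraph V E) (v : V) : ℕ :=
  {e : E | v ∈ G.inc e}.ncard

/-- The vertices incident with some edge of `W`: the vertex set of `G[W]`. -/
def supp (G : Multigraph V E) (W : Set E) : Set V :=
  {v | ∃ e ∈ W, v ∈ G.inc e}

/-- Edges `e` and `f` lie in the same component of `G[W]`. -/
def EdgeConn (G : Multigraph V E) (W : Set E) (e f : E) : Prop :=
  ∃ u v : V, u ∈ G.inc e ∧ v ∈ G.inc f ∧ G.Reach W u v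

/-- Every component of `G[W]` is a star whose center lies in `C`. -/
def StarComponents (G : Multigraph V E) (W : Set E) (C : Set V) : Prop :=
  ∀ e ∈ W, ∃ w ∈ C, ∀ f ∈ W, G.EdgeConn W e f →
    (w ∈ G.inc f ∧ ¬ (G.inc f).IsDiag ∧
      ∀ g ∈ W, G.EdgeConn W e g → G.inc g = G.inc f → g = f)

/-- The setoid on `V` identifying the vertices connected by edges of `W`. -/
def contractSetoid (G : Multigraph V E) (W : Set E) : Setoid V where
  r := G.Reach W
  iseqv := ⟨fun _ => Relation.ReflTransGen.refl,
    fun h =>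
      haveI : Std.Symm (G.Step W) := ⟨fun _ _ h' => G.step_symm W h'⟩
      (Relation.ReflTransGen.symmetric (r := G.Step W)).symm _ _ h,
    fun h h' => Relation.ReflTransGen.trans h h'⟩

/-- The contraction `G/W` of the edges in `W`. -/
def contract (G : Multigraph V E) (W : Set E) :
    Multigraph (Quotient (G.contractSetoid W)) {e : E // e ∉ W} :=
  ⟨fun e => (G.inc e.val).map (Quotient.mk (G.contractSetoid W))⟩

/-- Deletion `G − D` of the edges in `D`. -/
def deleteEdges (G : Multigraph V E) (D : Set E) : Multigraph V {e : E // e ∉ D} :=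
  ⟨fun e => G.inc e.val⟩

/-- The closed neighbourhood `N_G[S]`. -/
def closedNbhd (G : Multigraph V E) (S : Set V) : Set V :=
  S ∪ {v | ∃ u ∈ S, ∃ e : E, G.inc e = s(u, v)}

/-- The induced subgraph `G[A]`, described using a choice `ends` of the pair of
endpoints of each edge. -/
def induce (G : Multigraph V E) (A : Set V) (ends : E → V × V)
    (hends : ∀ e, G.inc e = s((ends e).1, (ends e).2)) :
    Multigraph A {e : E // e ∈ G.edgesWithin A} :=
  ⟨fun e => s(⟨(ends e.val).1, e.prop _ (by rw [hends]; exact Sym2.mem_mk_left _ _)⟩,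
              ⟨(ends e.val).2, e.prop _ (by rw [hends]; exact Sym2.mem_mk_right _ _)⟩)⟩

end Multigraph


open Multigraph

/-!
Attach to each clique `V_i` a new vertex, its hub, joined to every vertex of `V_i` by a spoke.
Weighting each spoke by `n = |V_i|`, one may trade the edges of the clique for the spokes: whatever
forest lies outside, `n ^ 2` times the number of its completions to a spanning tree by clique edges
(with the hub hanging as a leaf) is the weighted number of its completions by spokes. Indeed, if the
forest splits `V_i` into blocks of sizes `b₁, …, b_m`, both numbers equal `n ^ m * ∏ b_j`.

Once all cliques are traded, each matching edge `e` lies on a path hub – vertex – vertex – hub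
whose ends are the ends of `e` in `G*`. In a spanning tree containing all of `M₀`, each such path
is either complete or lacks exactly one of its two spokes, every other vertex keeps its spoke, and
the complete paths form a spanning tree of `G*`. Omitting the spoke at a vertex of `V_i` costs a
factor `|V_i|⁻¹`.
-/

namespace Multigraph

open Finset
open scoped Classical

section Reachability

variable {W W' ι A B : Type*} {X : Multigraph W A} {Y : Multigraph W' B} {S T : Set A}
  {x y z : W} {e : A}

theorem reach_refl (X : Multigraph W A) (S : Set A) (x : W) : X.Reach S x x :=
  Relation.ReflTransGen.refl

theorem reach_of_mem (he : e ∈ S) (hinc : X.inc e = s(x, y)) : X.Reach S x y :=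
  Relation.ReflTransGen.single ⟨e, he, hinc⟩

theorem Reach.symm (h : X.Reach S x y) : X.Reach S y x :=
  (X.contractSetoid S).symm h

theorem Reach.trans (hxy : X.Reach S x y) (hyz : X.Reach S y z) : X.Reach S x z :=
  Relation.ReflTransGen.trans hxy hyz

theorem Reach.map {T : Set B} (p : W → W')
    (h : ∀ e ∈ S, ∀ u v, X.inc e = s(u, v) → Y.Reach T (p u) (p v)) (hxy : X.Reach S x y) :
    Y.Reach T (p x) (p y) := by
  induction hxy with
  | refl => exact reach_refl _ _ _
  | tail _ hstep ih =>
    obtain ⟨e, he, hinc⟩ := hstep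
    exact ih.trans (h e he _ _ hinc)

theorem Reach.mono (hST : S ⊆ T) (hxy : X.Reach S x y) : X.Reach T x y :=
  hxy.map id fun _ he _ _ hinc => reach_of_mem (hST he) hinc

theorem Reach.apply_eq (p : W → ι) (h : ∀ e ∈ S, ((X.inc e).map p).IsDiag)
    (hxy : X.Reach S x y) : p x = p y := by
  induction hxy with
  | refl => rfl
  | tail _ hstep ih =>
    obtain ⟨e, he, hinc⟩ := hstep
    have heq := h e he
    rw [hinc, Sym2.map_mk, Sym2.mk_isDiag_iff] at heq
    exact ih.trans heq

theorem reach_insert_of_isDiag (he : (X.inc e).IsDiag) :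
    X.Reach (insert e S) x y ↔ X.Reach S x y := by
  refine ⟨fun h => h.map id ?_, Reach.mono (Set.subset_insert e S)⟩
  rintro f (rfl | hf) u v hinc
  · obtain rfl : u = v := by simpa [hinc] using he
    exact reach_refl _ _ _
  · exact reach_of_mem hf hinc

end Reachability

section Contraction

variable {W ι κ A : Type*} {X : Multigraph W A} {H F : Set A} {p : W → ι}

/-- The multigraph on `ι` obtained from `X` by identifying vertices along `p : W → ι`. All edges
are kept, so an edge whose ends are identified becomes a loop. -/
def push (X : Multigraph W A) (p : W → ι) : Multigraph ι A :=
  ⟨fun e => (X.inc e).map p⟩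

theorem push_push (X : Multigraph W A) (p : W → ι) (q : ι → κ) :
    (X.push p).push q = X.push (q ∘ p) := by
  simp only [push, Sym2.map_map]

theorem push_inc_of_inc_eq {e : A} {u v : W} (h : X.inc e = s(u, v)) (p : W → ι) :
    (X.push p).inc e = s(p u, p v) := by
  simp only [push, h, Sym2.map_mk]

theorem exists_inc_eq_of_push_inc_eq {e : A} {i j : ι} (h : (X.push p).inc e = s(i, j)) :
    ∃ u v, X.inc e = s(u, v) ∧ p u = i ∧ p v = j := by
  change (X.inc e).map p = s(i, j) at h
  induction hz : X.inc e with
  | _ u v =>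
    rw [hz, Sym2.map_mk, Sym2.eq_iff] at h
    obtain ⟨hu, hv⟩ | ⟨hu, hv⟩ := h
    · exact ⟨u, v, rfl, hu, hv⟩
    · exact ⟨v, u, Sym2.eq_swap, hv, hu⟩

/-- `p` exhibits `ι` as the vertex set of the contraction of the edge set `H`: it is onto, and its
fibres are the components of the spanning subgraph with edge set `H`. -/
structure IsContraction (X : Multigraph W A) (H : Set A) (p : W → ι) : Prop where
  surjective : Function.Surjective p
  reach_iff : ∀ x y, X.Reach H x y ↔ p x = p y

theorem isContraction_quotientMk (X : Multigraph W A) (H : Set A) :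
    X.IsContraction H (Quotient.mk (X.contractSetoid H)) :=
  ⟨Quotient.mk_surjective, fun _ _ => ⟨fun h => Quotient.sound h, fun h => Quotient.exact h⟩⟩

theorem isContraction_of_section {σ : ι → W} (hσ : Function.RightInverse σ p)
    (hp : ∀ e ∈ H, ((X.inc e).map p).IsDiag)
    (hreach : ∀ x, X.Reach H x (σ (p x))) : X.IsContraction H p where
  surjective := hσ.surjective
  reach_iff x y := by
    refine ⟨fun h => h.apply_eq p hp, fun h => (hreach x).trans ?_⟩
    rw [h]
    exact (hreach y).symm

theorem IsContraction.reach_union_iff (hp : X.IsContraction H p) {x y : W} :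
    X.Reach (H ∪ F) x y ↔ (X.push p).Reach F (p x) (p y) := by
  have reach_of_eq {u v : W} (h : p u = p v) : X.Reach (H ∪ F) u v :=
    ((hp.reach_iff u v).2 h).mono Set.subset_union_left
  constructor
  · refine Reach.map p ?_
    rintro e (he | he) u v hinc
    · rw [(hp.reach_iff u v).1 (reach_of_mem he hinc)]
      exact reach_refl _ _ _
    · exact reach_of_mem he (push_inc_of_inc_eq hinc p)
  · obtain ⟨σ, hσ⟩ := hp.surjective.hasRightInverse
    intro h
    have hlift : X.Reach (H ∪ F) (σ (p x)) (σ (p y)) := by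
      refine h.map σ fun e he i j hinc => ?_
      obtain ⟨u, v, huv, rfl, rfl⟩ := exists_inc_eq_of_push_inc_eq hinc
      exact ((reach_of_eq (hσ (p u))).trans (reach_of_mem (Or.inr he) huv)).trans
        (reach_of_eq (hσ (p v)).symm)
    exact ((reach_of_eq (hσ (p x)).symm).trans hlift).trans (reach_of_eq (hσ (p y)))

theorem IsContraction.connectedOn_union_iff (hp : X.IsContraction H p) :
    X.ConnectedOn (H ∪ F) ↔ (X.push p).ConnectedOn F := by
  simp only [ConnectedOn, hp.reach_union_iff, hp.surjective.forall]

/-- The vertex map that identifies `b` with `a`, and so contracts an edge joining the two. -/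
noncomputable def merge {a b : W} (hab : a ≠ b) (x : W) : {x : W // x ≠ b} :=
  if h : x = b then ⟨a, hab⟩ else ⟨x, h⟩

theorem merge_of_ne {a b : W} (hab : a ≠ b) {x : W} (hx : x ≠ b) : merge hab x = ⟨x, hx⟩ :=
  dif_neg hx

theorem merge_self {a b : W} (hab : a ≠ b) : merge hab b = ⟨a, hab⟩ :=
  dif_pos rfl

theorem isContraction_merge {e : A} {a b : W} (hab : a ≠ b) (he : X.inc e = s(a, b)) :
    X.IsContraction {e} (merge hab) := by
  refine isContraction_of_section (σ := Subtype.val) (fun x => merge_of_ne hab x.2) ?_ fun x => ?_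
  · rintro f rfl
    rw [he, Sym2.map_mk, merge_of_ne hab hab, merge_self, Sym2.mk_isDiag_iff]
  · by_cases hx : x = b
    · subst hx
      rw [merge_self]
      exact reach_of_mem rfl (he.trans Sym2.eq_swap)
    · rw [merge_of_ne hab hx]
      exact reach_refl _ _ _

theorem card_ne_add_one [Finite W] (b : W) : Nat.card {x // x ≠ b} + 1 = Nat.card W := by
  rw [← Finite.card_option, Nat.card_congr (Equiv.optionSubtypeNe b)]

end Contraction

section SpanningTree

variable {W ι A B : Type*} {X : Multigraph W A} {H F S : Finset A}
  {p : W → ι} {e : A}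

theorem isSpanningTree_coe_iff :
    X.IsSpanningTree S ↔ X.ConnectedOn S ∧ #S + 1 = Nat.card W := by
  rw [IsSpanningTree, Set.ncard_coe_finset]

theorem isSpanningTree_map_iff {Y : Multigraph W B} (f : A ↪ B)
    (h : ∀ e ∈ S, Y.inc (f e) = X.inc e) :
    Y.IsSpanningTree ↑(S.map f) ↔ X.IsSpanningTree S := by
  rw [isSpanningTree_coe_iff, isSpanningTree_coe_iff, card_map]
  refine and_congr_left' (forall₂_congr fun x y => ⟨Reach.map id ?_, Reach.map id ?_⟩)
  · intro _ hf u v hinc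
    obtain ⟨e, he, rfl⟩ := mem_map.1 (mem_coe.1 hf)
    exact reach_of_mem he ((h e he).symm.trans hinc)
  · intro e he u v hinc
    exact reach_of_mem (mem_coe.2 (mem_map_of_mem f he)) ((h e he).trans hinc)

variable [Finite W] [Finite ι]

theorem card_le_card_add_card_of_reach (hp : ∀ x y, p x = p y → X.Reach H x y) :
    Nat.card W ≤ #H + Nat.card ι := by
  induction H using Finset.induction_on generalizing W with
  | empty =>
    refine (Nat.card_le_card_of_injective p fun x y hxy => ?_).trans (Nat.le_add_left _ _)
    exact (hp x y hxy).apply_eq id (by simp)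
  | insert e H he ih =>
    rw [card_insert_of_notMem he]
    rw [coe_insert] at hp
    obtain ⟨a, b, hinc⟩ : ∃ a b, X.inc e = s(a, b) := by
      induction X.inc e with
      | _ a b => exact ⟨a, b, rfl⟩
    by_cases hab : a = b
    · have hloop : (X.inc e).IsDiag := by simpa [hinc] using hab
      have := ih fun x y hxy => (reach_insert_of_isDiag hloop).1 (hp x y hxy)
      omega
    · have hmerge (x y : {x // x ≠ b}) (hxy : p x = p y) :
          (X.push (merge hab)).Reach H x y := by
        have := (isContraction_merge hab hinc).reach_union_iff.1 (hp x y hxy)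
        rwa [merge_of_ne hab x.2, merge_of_ne hab y.2] at this
      have := ih hmerge
      have := card_ne_add_one b
      omega

theorem ConnectedOn.card_le (h : X.ConnectedOn F) : Nat.card W ≤ #F + 1 := by
  simpa using card_le_card_add_card_of_reach (p := fun _ => ()) fun x y _ => h x y

theorem IsContraction.isSpanningTree_union_iff [DecidableEq A] (hp : X.IsContraction H p)
    (hHF : Disjoint H F) :
    X.IsSpanningTree ↑(H ∪ F) ↔
      #H + Nat.card ι = Nat.card W ∧ (X.push p).IsSpanningTree F := by
  have hH : Nat.card W ≤ #H + Nat.card ι :=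
    card_le_card_add_card_of_reach fun x y => (hp.reach_iff x y).2
  rw [isSpanningTree_coe_iff, isSpanningTree_coe_iff, card_union_of_disjoint hHF, coe_union,
    hp.connectedOn_union_iff]
  constructor
  · rintro ⟨hconn, hcard⟩
    have := hconn.card_le
    exact ⟨by omega, hconn, by omega⟩
  · rintro ⟨hcard, hconn, hF⟩
    exact ⟨hconn, by omega⟩

theorem IsSpanningTree.not_isDiag (h : X.IsSpanningTree S) (he : e ∈ S) :
    ¬ (X.inc e).IsDiag := by
  intro hloop
  obtain ⟨hconn, hcard⟩ := isSpanningTree_coe_iff.1 h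
  have herase : X.ConnectedOn (S.erase e) := fun x y => by
    rw [← reach_insert_of_isDiag hloop, ← coe_insert, insert_erase he]
    exact hconn x y
  have := herase.card_le
  have := card_erase_add_one he
  omega

theorem isSpanningTree_insert_iff [DecidableEq A] {a b : W} (hab : a ≠ b)
    (hinc : X.inc e = s(a, b)) (he : e ∉ F) :
    X.IsSpanningTree ↑(insert e F) ↔ (X.push (merge hab)).IsSpanningTree F := by
  have hcontr : X.IsContraction ↑({e} : Finset A) (merge hab) := by
    simpa using isContraction_merge hab hinc
  rw [insert_eq, hcontr.isSpanningTree_union_iff (disjoint_singleton_left.2 he), card_singleton,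
    add_comm 1, card_ne_add_one]
  exact and_iff_right rfl

end SpanningTree

section CompleteGraph

variable {W ι A : Type*} {X : Multigraph W A} {K : Finset A} {U : Finset W} {p : W → ι}

/-- The edges in `K` form a complete graph on the vertex set `U`: each pair of distinct vertices of
`U` is joined by exactly one edge of `K`, and `K` contains nothing else. -/
def IsCompleteOn (X : Multigraph W A) (K : Finset A) (U : Finset W) : Prop :=
  Set.BijOn X.inc K {z | ¬ z.IsDiag ∧ ∀ v ∈ z, v ∈ U}

/-- The spanning trees of `X` all of whose edges lie in the finite set `K`. -/
noncomputable def spanningTrees (X : Multigraph W A) (K : Finset A) : Finset (Finset A) :=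
  K.powerset.filter fun F => X.IsSpanningTree F

theorem mem_spanningTrees {F : Finset A} : F ∈ X.spanningTrees K ↔ F ⊆ K ∧ X.IsSpanningTree F := by
  rw [spanningTrees, mem_filter, mem_powerset]

theorem spanningTrees_of_card_eq_one (hW : Nat.card W = 1) : X.spanningTrees K = {∅} := by
  have : Subsingleton W := (Nat.card_eq_one_iff_unique.1 hW).1
  ext F
  rw [mem_spanningTrees, isSpanningTree_coe_iff, hW, mem_singleton]
  constructor
  · rintro ⟨-, -, hcard⟩
    simpa using hcard
  · rintro rfl
    refine ⟨empty_subset K, fun x y => ?_, rfl⟩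
    rw [Subsingleton.elim x y]
    exact reach_refl _ _ _

theorem IsCompleteOn.two_mul_sum (hK : X.IsCompleteOn K U) {φ : A → ℕ} {ψ : W × W → ℕ}
    (h : ∀ e ∈ K, ∀ u v, X.inc e = s(u, v) → φ e = ψ (u, v)) :
    2 * ∑ e ∈ K, φ e = ∑ x ∈ U.offDiag, ψ x := by
  have mem_image (x : W × W) (hx : x ∈ U.offDiag) : s(x.1, x.2) ∈ K.image X.inc := by
    rw [mem_offDiag] at hx
    exact mem_image.2 (hK.surjOn ⟨by simpa using hx.2.2, by simp [hx.1, hx.2.1]⟩)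
  rw [← sum_fiberwise_of_maps_to mem_image ψ, sum_image hK.injOn, mul_sum]
  refine sum_congr rfl fun e he => ?_
  obtain ⟨u, v, huv⟩ : ∃ u v, X.inc e = s(u, v) := by
    induction X.inc e with
    | _ u v => exact ⟨u, v, rfl⟩
  obtain ⟨hne, hu, hv⟩ : u ≠ v ∧ u ∈ U ∧ v ∈ U := by
    simpa [huv] using hK.mapsTo he
  have hfibre : {x ∈ U.offDiag | s(x.1, x.2) = s(u, v)} = {(u, v), (v, u)} := by
    ext ⟨x, y⟩
    simp only [mem_filter, mem_offDiag, mem_insert, mem_singleton, Prod.mk.injEq, Sym2.eq_iff]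
    refine and_iff_right_of_imp ?_
    rintro (⟨rfl, rfl⟩ | ⟨rfl, rfl⟩)
    exacts [⟨hu, hv, hne⟩, ⟨hv, hu, hne.symm⟩]
  rw [huv, hfibre, sum_pair (by simp [hne]), ← h e he u v huv,
    ← h e he v u (huv.trans Sym2.eq_swap), two_mul]

theorem sum_card_spanningTrees_filter_mem {m : ℕ} (hW : Nat.card W = m + 1) :
    ∑ e ∈ K, #{F ∈ X.spanningTrees K | e ∈ F} = m * #(X.spanningTrees K) := by
  rw [mul_comm, ← smul_eq_mul, ← sum_const]
  refine (sum_card_bipartiteAbove_eq_sum_card_bipartiteBelow (· ∈ ·)).trans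
    (sum_congr rfl fun F hF => ?_)
  obtain ⟨hFK, htree⟩ := mem_spanningTrees.1 hF
  have hcard : #F + 1 = m + 1 := (isSpanningTree_coe_iff.1 htree).2.trans hW
  rw [bipartiteBelow, filter_mem_eq_inter, inter_eq_right.2 hFK]
  exact Nat.succ_injective hcard

theorem card_spanningTrees_filter_mem [Finite W] {e : A} {a b : W} (he : e ∈ K) (hab : a ≠ b)
    (hinc : X.inc e = s(a, b)) :
    #{F ∈ X.spanningTrees K | e ∈ F} = #((X.push (merge hab)).spanningTrees K) := by
  have notMem_of_tree {F : Finset A} (hF : (X.push (merge hab)).IsSpanningTree F) : e ∉ F :=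
    fun heF => hF.not_isDiag heF <| by
      rw [push_inc_of_inc_eq hinc, merge_of_ne hab hab, merge_self, Sym2.mk_isDiag_iff]
  refine card_nbij' (·.erase e) (insert e) ?_ ?_ ?_ ?_
  all_goals
    intro F hF
    simp only [mem_coe, mem_filter, mem_spanningTrees] at hF ⊢
  · rw [← isSpanningTree_insert_iff hab hinc (notMem_erase e F), insert_erase hF.2]
    exact ⟨(erase_subset e F).trans hF.1.1, hF.1.2⟩
  · rw [isSpanningTree_insert_iff hab hinc (notMem_of_tree hF.2)]
    exact ⟨⟨insert_subset he hF.1, hF.2⟩, mem_insert_self e F⟩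
  · exact insert_erase hF.2
  · exact erase_insert (notMem_of_tree hF.2)

variable [Fintype ι]

theorem sum_comp_eq_sum_card_mul (U : Finset W) (p : W → ι) (f : ι → ℕ) :
    ∑ u ∈ U, f (p u) = ∑ i, #{u ∈ U | p u = i} * f i := by
  simp only [← sum_fiberwise' U p f, sum_const, smul_eq_mul]

theorem prod_card_fibre_merge (U : Finset W) (p : W → ι) {i j : ι} (hij : i ≠ j) :
    ∏ x, #{u ∈ U | merge hij (p u) = x} =
      (#{u ∈ U | p u = i} + #{u ∈ U | p u = j}) * ∏ x ∈ {i, j}ᶜ, #{u ∈ U | p u = x} := by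
  have fibre_self : {u ∈ U | merge hij (p u) = ⟨i, hij⟩} =
      {u ∈ U | p u = i} ∪ {u ∈ U | p u = j} := by
    ext u
    by_cases hu : p u = j
    · simp [hu, merge_self, hij.symm]
    · simp [hu, merge_of_ne]
  have fibre_of_ne (x : {x // x ≠ j}) (hx : x ≠ ⟨i, hij⟩) :
      {u ∈ U | merge hij (p u) = x} = {u ∈ U | p u = x} := by
    refine filter_congr fun u _ => ?_
    by_cases hu : p u = j
    · simp [hu, merge_self, hx.symm, x.2.symm]
    · simp [merge_of_ne _ hu, Subtype.ext_iff]
  have hdisj : Disjoint {u ∈ U | p u = i} {u ∈ U | p u = j} :=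
    disjoint_filter.2 fun u _ hi hj => hij (hi.symm.trans hj)
  rw [← mul_prod_erase univ _ (mem_univ ⟨i, hij⟩), fibre_self, card_union_of_disjoint hdisj,
    prod_congr rfl fun x hx => by rw [fibre_of_ne x (ne_of_mem_erase hx)]]
  congr 1
  refine prod_nbij Subtype.val ?_ Subtype.val_injective.injOn ?_ fun _ _ => rfl
  · rintro ⟨x, hx⟩
    simp_all
  · intro x hx
    simp_all

theorem sum_ne_add {m : ℕ} (hι : Fintype.card ι = m + 1) (b : ι → ℕ) :
    ∑ i, ∑ j, (if i = j then 0 else b i + b j) = 2 * m * ∑ i, b i := by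
  have row (i : ι) :
      ∑ j, (if i = j then 0 else b i + b j) + 2 * b i = (m + 1) * b i + ∑ j, b j := by
    rw [← Fintype.sum_ite_eq i fun _ => 2 * b i, ← sum_add_distrib, ← hι, ← card_univ,
      ← smul_eq_mul #univ, ← sum_const, ← sum_add_distrib]
    refine sum_congr rfl fun j _ => ?_
    split_ifs with h
    · rw [h]; ring
    · ring
  have total := sum_congr rfl fun i (_ : i ∈ univ) => row i
  simp only [sum_add_distrib, ← mul_sum, sum_const, card_univ, hι, smul_eq_mul] at total
  linarith

theorem sum_offDiag_prod_card_fibre_merge {m : ℕ} (hι : Fintype.card ι = m + 1) (U : Finset W)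
    (p : W → ι) :
    ∑ x ∈ U.offDiag, (if h : p x.1 = p x.2 then 0
      else ∏ y, #{u ∈ U | merge h (p u) = y}) = 2 * m * #U * ∏ i, #{u ∈ U | p u = i} := by
  let b (i : ι) : ℕ := #{u ∈ U | p u = i}
  let f (i j : ι) : ℕ := if h : i = j then 0 else ∏ y, #{u ∈ U | merge h (p u) = y}
  have mul_f (i j : ι) : b i * (b j * f i j) = (if i = j then 0 else b i + b j) * ∏ x, b x := by
    by_cases hij : i = j
    · simp only [f, hij, dif_pos, if_pos, mul_zero, zero_mul]
    · simp only [f, hij, dif_neg, if_neg, not_false_iff, prod_card_fibre_merge]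
      rw [← prod_mul_prod_compl {i, j} b, prod_pair hij]
      ring
  calc ∑ x ∈ U.offDiag, f (p x.1) (p x.2)
      = ∑ x ∈ U ×ˢ U, f (p x.1) (p x.2) := by
        refine sum_subset (fun x => ?_) fun x hx hdiag => ?_
        · simp only [mem_offDiag, mem_product]
          tauto
        · have : x.1 = x.2 := by simp_all [mem_offDiag]
          simp only [f, this, dif_pos]
    _ = ∑ i, ∑ j, b i * (b j * f i j) := by
        simp only [sum_product, sum_comp_eq_sum_card_mul U p, mul_sum, b,
          sum_comp_eq_sum_card_mul U p fun i => ∑ j, #{u ∈ U | p u = j} * f i j]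
    _ = 2 * m * #U * ∏ i, b i := by
        simp only [mul_f, ← sum_mul, sum_ne_add hι, b]
        rw [← card_eq_sum_card_fiberwise fun u _ => mem_coe.2 (mem_univ (p u))]

theorem IsCompleteOn.sq_mul_card_spanningTrees_push [Nonempty ι] (hK : X.IsCompleteOn K U)
    (p : W → ι) :
    #U ^ 2 * #((X.push p).spanningTrees K) = #U ^ Fintype.card ι * ∏ i, #{u ∈ U | p u = i} := by
  obtain ⟨m, hm⟩ := Nat.exists_eq_add_of_lt (Fintype.card_pos (α := ι))
  rw [zero_add] at hm
  induction m generalizing ι with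
  | zero =>
    obtain ⟨hunique⟩ := Fintype.card_eq_one_iff_nonempty_unique.1 hm
    rw [spanningTrees_of_card_eq_one (by simp), card_singleton, hm, Fintype.prod_unique,
      filter_true_of_mem fun u _ => Subsingleton.elim (p u) default]
    ring
  | succ m ih =>
    have edge (e : A) (he : e ∈ K) (u v : W) (huv : X.inc e = s(u, v)) :
        #U ^ 2 * #{F ∈ (X.push p).spanningTrees K | e ∈ F} =
          #U ^ (m + 1) * if h : p u = p v then 0 else ∏ y, #{x ∈ U | merge h (p x) = y} := by
      have hpush := push_inc_of_inc_eq huv p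
      split_ifs with h
      · rw [mul_zero, mul_eq_zero, card_eq_zero, filter_eq_empty_iff]
        refine Or.inr fun F hF he => (mem_spanningTrees.1 hF).2.not_isDiag he ?_
        rwa [hpush, Sym2.mk_isDiag_iff]
      · have hcard := card_ne_add_one (p v)
        simp only [Nat.card_eq_fintype_card, hm, add_left_inj] at hcard
        have : Nonempty {x // x ≠ p v} := ⟨⟨p u, h⟩⟩
        rw [card_spanningTrees_filter_mem he h hpush, push_push, ih _ hcard, hcard]
        simp only [Function.comp_apply]
    -- Count the pairs (tree, edge of the tree); contracting the edge leaves a tree counted by `ih`.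
    have double_count := hK.two_mul_sum
      (ψ := fun x => #U ^ (m + 1) *
        if h : p x.1 = p x.2 then 0 else ∏ y, #{u ∈ U | merge h (p u) = y}) edge
    rw [← mul_sum, sum_card_spanningTrees_filter_mem (by simpa using hm), ← mul_sum,
      sum_offDiag_prod_card_fibre_merge hm] at double_count
    refine Nat.eq_of_mul_eq_mul_left (show 0 < 2 * (m + 1) by positivity) ?_
    rw [hm]
    linear_combination double_count

end CompleteGraph

section Star

variable {W L : Type*} {Y : Multigraph W L} {P U : Finset L} {f : L → W} {c : W}

theorem connectedOn_iff_of_inc_eq_center (hinc : ∀ l ∈ P, Y.inc l = s(f l, c)) :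
    Y.ConnectedOn P ↔ ∀ i ≠ c, ∃ l ∈ P, f l = i := by
  constructor
  · intro h i hic
    by_contra! hi
    have hiso : (i = i) = (c = i) := (h i c).apply_eq (· = i) fun l hl => by
      simp [hinc l hl, hi l hl, hic.symm]
    exact hic (hiso.mp rfl).symm
  · intro h
    have reach_center (i : W) : Y.Reach P i c := by
      by_cases hic : i = c
      · rw [hic]
        exact reach_refl _ _ _
      · obtain ⟨l, hl, rfl⟩ := h i hic
        exact reach_of_mem hl (hinc l hl)
    exact fun x y => (reach_center x).trans (reach_center y).symm

theorem isSpanningTree_iff_exists_transversal [Fintype W] (hinc : ∀ l ∈ P, Y.inc l = s(f l, c)) :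
    Y.IsSpanningTree P ↔ ∃ t : {x // x ≠ c} → L, (∀ i, f (t i) = i) ∧ univ.image t = P := by
  have card_image {t : {x // x ≠ c} → L} (ht : ∀ i, f (t i) = i) :
      #(univ.image t) = Fintype.card {x // x ≠ c} := by
    refine (card_image_of_injective _ fun i j hij => Subtype.ext ?_).trans card_univ
    rw [← ht i, hij, ht j]
  rw [isSpanningTree_coe_iff, ← card_ne_add_one c, Nat.card_eq_fintype_card, add_left_inj,
    connectedOn_iff_of_inc_eq_center hinc]
  constructor
  · rintro ⟨hsurj, hP⟩
    choose t ht hft using fun i : {x // x ≠ c} => hsurj i i.2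
    refine ⟨t, hft, eq_of_subset_of_card_le (image_subset_iff.2 fun i _ => ht i) ?_⟩
    rw [card_image hft, hP]
  · rintro ⟨t, hft, rfl⟩
    exact ⟨fun i hi => ⟨t ⟨i, hi⟩, mem_image_of_mem t (mem_univ _), hft _⟩, card_image hft⟩

theorem card_spanningTrees_of_inc_eq_center [Fintype W] (hinc : ∀ l ∈ U, Y.inc l = s(f l, c)) :
    #(Y.spanningTrees U) = ∏ i : {x // x ≠ c}, #{l ∈ U | f l = i} := by
  have isSpanningTree_iff {F : Finset L} (hF : F ⊆ U) :=
    isSpanningTree_iff_exists_transversal fun l hl => hinc l (hF hl)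
  rw [← Fintype.card_piFinset]
  symm
  refine card_nbij (fun t => univ.image t) ?_ ?_ ?_
  · intro t ht
    simp only [mem_coe, Fintype.mem_piFinset, mem_filter] at ht
    have hsub : univ.image t ⊆ U := image_subset_iff.2 fun i _ => (ht i).1
    exact mem_spanningTrees.2 ⟨hsub, (isSpanningTree_iff hsub).2 ⟨t, fun i => (ht i).2, rfl⟩⟩
  · intro t ht t' ht' (heq : univ.image t = univ.image t')
    simp only [mem_coe, Fintype.mem_piFinset, mem_filter] at ht ht'
    funext i
    obtain ⟨j, -, hj⟩ := mem_image.1 (heq ▸ mem_image_of_mem t (mem_univ i))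
    have hij : j = i := Subtype.ext (by rw [← (ht' j).2, hj, (ht i).2])
    rw [← hj, hij]
  · intro F hF
    obtain ⟨hFU, htree⟩ := mem_spanningTrees.1 (mem_coe.1 hF)
    obtain ⟨t, hft, rfl⟩ := (isSpanningTree_iff hFU).1 htree
    refine ⟨t, ?_, rfl⟩
    simp only [mem_coe, Fintype.mem_piFinset, mem_filter]
    exact fun i => ⟨hFU (mem_image_of_mem t (mem_univ i)), hft i⟩

end Star

section Hub

variable {V E κ ι : Type*} {G : Multigraph V E} {part : V → κ} {K D F : Finset E} {U P Q : Finset V}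
  {r : V} {j : κ}

/-- The multigraph obtained from `G` by adding, for each part `i : κ`, a new vertex `inr i` (its
hub), joined to each vertex `v` of the part by an edge `inr v` (the spoke at `v`). -/
def hub (G : Multigraph V E) (part : V → κ) : Multigraph (V ⊕ κ) (E ⊕ V) :=
  ⟨Sum.elim (fun e => (G.inc e).map Sum.inl) fun v => s(Sum.inl v, Sum.inr (part v))⟩

theorem hub_inc_inl (e : E) : (G.hub part).inc (Sum.inl e) = (G.inc e).map Sum.inl :=
  rfl

theorem hub_inc_inr (v : V) : (G.hub part).inc (Sum.inr v) = s(Sum.inl v, Sum.inr (part v)) :=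
  rfl

/-- The edges `D` of `G` and the spokes at `Q` form a spanning tree of `G.hub part`. -/
def IsHubTree (G : Multigraph V E) (part : V → κ) (D : Finset E) (Q : Finset V) : Prop :=
  (G.hub part).IsSpanningTree ↑(D.disjSum Q)

theorem disjSum_union_disjSum [DecidableEq E] (D F : Finset E) (Q P : Finset V) :
    D.disjSum Q ∪ F.disjSum P = (D ∪ F).disjSum (Q ∪ P) := by
  ext (_ | _) <;> simp

theorem disjoint_disjSum_disjSum (hDF : Disjoint D F) (hQP : Disjoint Q P) :
    Disjoint (D.disjSum Q) (F.disjSum P) := by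
  rw [disjoint_left] at hDF hQP ⊢
  rintro (_ | _) <;> simp_all

theorem IsCompleteOn.sq_mul_card_eq_sum_spokes [Finite ι] (hK : G.IsCompleteOn K U)
    {Y : Multigraph ι (E ⊕ V)} {p : V → ι} {c : ι}
    (hinl : ∀ e ∈ K, Y.inc (Sum.inl e) = (G.push p).inc e)
    (hinr : ∀ u ∈ U, Y.inc (Sum.inr u) = s(p u, c)) (hc : ∀ u, p u ≠ c) (hr : r ∈ U) :
    #U ^ 2 * #{F ∈ K.powerset | Y.IsSpanningTree ↑(F.disjSum {r})} =
      ∑ P ∈ U.powerset, if Y.IsSpanningTree ↑((∅ : Finset E).disjSum P) then #U ^ #P else 0 := by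
  obtain ⟨_⟩ := nonempty_fintype ι
  have merge_apply (u : V) : merge (hc r) (p u) = ⟨p u, hc u⟩ := merge_of_ne _ _
  have clique_tree_iff {F : Finset E} (hF : F ∈ K.powerset) :
      Y.IsSpanningTree ↑(F.disjSum {r}) ↔ (G.push (merge (hc r) ∘ p)).IsSpanningTree F := by
    have hinsert : F.disjSum {r} = insert (Sum.inr r) (F.map Function.Embedding.inl) := by
      ext (_ | _) <;> simp
    rw [hinsert, isSpanningTree_insert_iff (hc r) (hinr r hr) (by simp), ← push_push]
    refine isSpanningTree_map_iff _ fun e he => ?_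
    simp only [push, Function.Embedding.inl_apply, hinl e (mem_powerset.1 hF he)]
  have star_tree_iff {P : Finset V} (hP : P ∈ U.powerset) :
      Y.IsSpanningTree ↑((∅ : Finset E).disjSum P) ↔
        (⟨fun u => s(p u, c)⟩ : Multigraph ι V).IsSpanningTree P := by
    rw [empty_disjSum]
    exact isSpanningTree_map_iff _ fun u hu => hinr u (mem_powerset.1 hP hu)
  have hcard := card_ne_add_one c
  rw [Nat.card_eq_fintype_card] at hcard
  have card_star_tree {P : Finset V}
      (hP : P ∈ (⟨fun u => s(p u, c)⟩ : Multigraph ι V).spanningTrees U) :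
      #P = Fintype.card {x // x ≠ c} := by
    have := (isSpanningTree_coe_iff.1 (mem_spanningTrees.1 hP).2).2
    omega
  have : Nonempty {x // x ≠ c} := ⟨⟨p r, hc r⟩⟩
  rw [filter_congr fun F => clique_tree_iff, ← sum_filter, filter_congr fun P => star_tree_iff]
  change #U ^ 2 * #((G.push (merge (hc r) ∘ p)).spanningTrees K) = ∑ P ∈ spanningTrees _ U, _
  rw [sum_congr rfl fun P hP => congrArg (#U ^ ·) (card_star_tree hP), sum_const,
    hK.sq_mul_card_spanningTrees_push, card_spanningTrees_of_inc_eq_center (fun u _ => rfl),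
    smul_eq_mul, mul_comm]
  simp only [Function.comp_apply, merge_apply, Subtype.ext_iff]

theorem IsContraction.isHubTree_union_iff [Finite V] [Finite κ] [Finite ι] [DecidableEq E]
    {p : V ⊕ κ → ι} (hp : (G.hub part).IsContraction ↑(D.disjSum Q) p) (hDF : Disjoint D F)
    (hQP : Disjoint Q P) :
    G.IsHubTree part (D ∪ F) (Q ∪ P) ↔ #(D.disjSum Q) + Nat.card ι = Nat.card (V ⊕ κ) ∧
      ((G.hub part).push p).IsSpanningTree ↑(F.disjSum P) := by
  rw [IsHubTree, ← disjSum_union_disjSum,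
    hp.isSpanningTree_union_iff (disjoint_disjSum_disjSum hDF hQP)]

theorem IsContraction.inl_ne_inr {p : V ⊕ κ → ι}
    (hp : (G.hub part).IsContraction ↑(D.disjSum Q) p) (hQ : ∀ v ∈ Q, part v ≠ j) {u : V} :
    p (Sum.inl u) ≠ p (Sum.inr j) := fun heq => by
  have hiso := ((hp.reach_iff _ _).2 heq).apply_eq (· = Sum.inr j) ?_
  · simp at hiso
  · rintro (e | v) hmem
    · rw [hub_inc_inl]
      induction G.inc e with
      | _ u v => simp
    · have hv : part v ≠ j := hQ v (by simpa using hmem)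
      simp [hub_inc_inr, hv]

theorem isHubTree_image_section_iff [Finite V] [Fintype κ] {r : κ → V}
    (hr : Function.RightInverse r part) :
    G.IsHubTree part D (univ.image r) ↔ G.IsSpanningTree D := by
  have hcontr : (G.hub part).IsContraction ↑((∅ : Finset E).disjSum (univ.image r))
      (Sum.elim id r) := by
    refine isContraction_of_section (σ := Sum.inl) (fun v => rfl) ?_ ?_
    · rintro (e | v) hmem
      · simp at hmem
      · obtain ⟨i, rfl⟩ : ∃ i, r i = v := by simpa using hmem
        simp [hub_inc_inr, hr i]
    · rintro (v | i)
      · exact reach_refl _ _ _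
      · refine (reach_of_mem (e := Sum.inr (r i)) (by simp) ?_).symm
        rw [hub_inc_inr, hr i]
        rfl
  have hcard : #((∅ : Finset E).disjSum (univ.image r)) + Nat.card V = Nat.card (V ⊕ κ) := by
    rw [card_disjSum, card_empty, card_image_of_injective _ hr.injective, card_univ, Nat.card_sum,
      ← Nat.card_eq_fintype_card, zero_add, add_comm]
  have htree := hcontr.isHubTree_union_iff (disjoint_empty_left D)
    (disjoint_empty_right (univ.image r))
  rw [empty_union, union_empty, disjSum_empty, and_iff_right hcard] at htree
  rw [htree]
  exact isSpanningTree_map_iff _ fun e _ => by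
    simp [push, hub_inc_inl, Sym2.map_map, Function.comp_def]

theorem IsCompleteOn.sq_mul_card_isHubTree [Finite V] [Finite κ] (hK : G.IsCompleteOn K U)
    (hDK : Disjoint D K) (hQ : ∀ v ∈ Q, part v ≠ j) (hU : ∀ u ∈ U, part u = j) (hr : r ∈ U) :
    #U ^ 2 * #{F ∈ K.powerset | G.IsHubTree part (D ∪ F) (insert r Q)} =
      ∑ P ∈ U.powerset, if G.IsHubTree part D (Q ∪ P) then #U ^ #P else 0 := by
  obtain ⟨ι, _, p, hp⟩ : ∃ (ι : Type _) (_ : Finite ι) (p : V ⊕ κ → ι),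
      (G.hub part).IsContraction ↑(D.disjSum Q) p :=
    ⟨_, inferInstance, _, isContraction_quotientMk _ _⟩
  have hQU {P : Finset V} (hP : P ⊆ U) : Disjoint Q P :=
    disjoint_left.2 fun v hvQ hvP => hQ v hvQ (hU v (hP hvP))
  have clique_iff {F : Finset E} (hF : F ∈ K.powerset) :=
    hp.isHubTree_union_iff (hDK.mono_right (mem_powerset.1 hF)) (hQU (singleton_subset_iff.2 hr))
  have star_iff {P : Finset V} (hP : P ∈ U.powerset) :=
    hp.isHubTree_union_iff (disjoint_empty_right D) (hQU (mem_powerset.1 hP))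
  simp only [union_empty] at star_iff
  rw [insert_eq, union_comm {r}, filter_congr fun F => clique_iff,
    sum_congr rfl fun P hP => if_congr (star_iff hP) rfl rfl]
  by_cases hcard : #(D.disjSum Q) + Nat.card ι = Nat.card (V ⊕ κ)
  · simp only [hcard, true_and]
    refine hK.sq_mul_card_eq_sum_spokes (p := p ∘ Sum.inl) (fun e _ => ?_) (fun u hu => ?_)
      (fun u => hp.inl_ne_inr hQ) hr
    · exact Sym2.map_map _
    · rw [push_inc_of_inc_eq rfl, hU u hu]
      rfl
  · simp only [hcard, false_and, filter_false, card_empty, mul_zero, if_false, sum_const_zero]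

end Hub

section Exchange

variable {V E κ : Type*} {G : Multigraph V E} {part : V → κ} {D : Finset E} {Q : Finset V}

theorem sum_powerset_union {α β : Type*} [AddCommMonoid β] {S T : Finset α} (hST : Disjoint S T)
    (f : Finset α → β) :
    ∑ R ∈ (S ∪ T).powerset, f R = ∑ P ∈ S.powerset, ∑ Q ∈ T.powerset, f (P ∪ Q) := by
  induction T using Finset.induction_on generalizing f with
  | empty => simp
  | insert a T ha ih =>
    rw [disjoint_insert_right] at hST
    have haST : a ∉ S ∪ T := by simp [hST.1, ha]
    simp only [union_insert, sum_powerset_insert haST, sum_powerset_insert ha, sum_add_distrib,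
      ih hST.2]

theorem IsCompleteOn.sq_mul_card_isHubTree_union [Finite V] [Finite κ] {A K : Finset E}
    {U : Finset V} {r : V} {j : κ} (hK : G.IsCompleteOn K U) (hDK : Disjoint D K)
    (hAK : Disjoint A K) (hQ : ∀ v ∈ Q, part v ≠ j) (hU : ∀ u ∈ U, part u = j) (hr : r ∈ U) :
    #U ^ 2 * #{F ∈ (A ∪ K).powerset | G.IsHubTree part (D ∪ F) (insert r Q)} =
      ∑ P ∈ U.powerset, #U ^ #P * #{F ∈ A.powerset | G.IsHubTree part (D ∪ F) (Q ∪ P)} := by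
  have exchange {F : Finset E} (hF : F ∈ A.powerset) :
      #U ^ 2 * #{F' ∈ K.powerset | G.IsHubTree part (D ∪ (F ∪ F')) (insert r Q)} =
        ∑ P ∈ U.powerset, if G.IsHubTree part (D ∪ F) (Q ∪ P) then #U ^ #P else 0 := by
    simp only [← union_assoc]
    exact hK.sq_mul_card_isHubTree
      (disjoint_union_left.2 ⟨hDK, hAK.mono_left (mem_powerset.1 hF)⟩) hQ hU hr
  simp only [card_filter _ (A ∪ K).powerset, sum_powerset_union hAK, ← card_filter]
  rw [mul_sum, sum_congr rfl fun F => exchange, sum_comm]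
  refine sum_congr rfl fun P _ => ?_
  rw [← sum_filter, sum_const, smul_eq_mul, mul_comm]

variable [Fintype V]

theorem IsCompleteOn.disjoint {K L : Finset E} {i j : κ}
    (hK : G.IsCompleteOn K {v | part v = i}) (hL : G.IsCompleteOn L {v | part v = j})
    (hij : i ≠ j) : Disjoint K L := by
  refine disjoint_left.2 fun e heK heL => hij ?_
  obtain ⟨v, hv⟩ : ∃ v, v ∈ G.inc e := ⟨_, Sym2.out_fst_mem _⟩
  have hvi := (hK.mapsTo heK).2 v hv
  have hvj := (hL.mapsTo heL).2 v hv
  simp only [mem_filter_univ] at hvi hvj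
  exact hvi.symm.trans hvj

theorem prod_sq_mul_card_isHubTree [Finite κ] {I : Finset κ} {K : κ → Finset E} {r : κ → V}
    (hK : ∀ i ∈ I, G.IsCompleteOn (K i) {v | part v = i}) (hD : ∀ i ∈ I, Disjoint D (K i))
    (hQ : ∀ v ∈ Q, part v ∉ I) (hr : ∀ i ∈ I, part (r i) = i) :
    (∏ i ∈ I, #{v | part v = i} ^ 2) *
        #{F ∈ (I.biUnion K).powerset | G.IsHubTree part (D ∪ F) (Q ∪ I.image r)} =
      ∑ P ∈ ({v | part v ∈ I} : Finset V).powerset,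
        if G.IsHubTree part D (Q ∪ P) then ∏ v ∈ P, #{w | part w = part v} else 0 := by
  induction I using Finset.induction_on generalizing Q with
  | empty => simp [filter_singleton, apply_ite card]
  | insert j I hj ih =>
    have hKj := hK j (mem_insert_self j I)
    simp only [mem_insert, not_or, forall_eq_or_imp] at hK hD hQ hr
    have hdisjK : Disjoint (I.biUnion K) (K j) :=
      (disjoint_biUnion_left _ _ _).2 fun i hi =>
        (hK.2 i hi).disjoint hKj (ne_of_mem_of_not_mem hi hj)
    have hunion : ({v | part v = j ∨ part v ∈ I} : Finset V) =
        ({v | part v = j} : Finset V) ∪ ({v | part v ∈ I} : Finset V) := filter_or ..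
    have hdisjU : Disjoint ({v | part v = j} : Finset V) ({v | part v ∈ I} : Finset V) :=
      disjoint_filter.2 fun v _ hv hvI => hj (hv ▸ hvI)
    have hQr (v : V) (hv : v ∈ Q ∪ I.image r) : part v ≠ j := by
      simp only [mem_union, mem_image] at hv
      obtain hv | ⟨i, hi, rfl⟩ := hv
      · exact (hQ v hv).1
      · rw [hr.2 i hi]
        exact ne_of_mem_of_not_mem hi hj
    have prod_eq_pow {P : Finset V} (hP : P ∈ ({v | part v = j} : Finset V).powerset) :
        ∏ v ∈ P, #{w | part w = part v} = #{v | part v = j} ^ #P :=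
      prod_eq_pow_card fun v hv => by rw [(mem_filter_univ v).1 (mem_powerset.1 hP hv)]
    rw [prod_insert hj, image_insert, biUnion_insert, union_comm (K j), union_insert,
      mul_comm (#_ ^ 2), mul_assoc,
      hKj.sq_mul_card_isHubTree_union hD.1 hdisjK hQr (by simp) (by simpa using hr.1), mul_sum]
    simp only [mem_insert]
    rw [hunion, sum_powerset_union hdisjU]
    refine sum_congr rfl fun P hP => ?_
    have hQP (v : V) (hv : v ∈ Q ∪ P) : part v ∉ I := by
      obtain hv | hv := mem_union.1 hv
      · exact (hQ v hv).2
      · rwa [(mem_filter_univ v).1 (mem_powerset.1 hP hv)]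
    rw [mul_left_comm, union_right_comm, ih hK.2 hD.2 hQP hr.2, mul_sum]
    refine sum_congr rfl fun P' hP' => ?_
    rw [mul_ite, mul_zero, union_assoc, ← prod_eq_pow hP,
      prod_union (hdisjU.mono (mem_powerset.1 hP) (mem_powerset.1 hP'))]

end Exchange

section Matching

variable {V E μ κ : Type*} {part : V → κ} {X : Multigraph V μ} {f : μ ⊕ μ ↪ V} {t s : Finset μ}

theorem IsHubTree.exists_mem_spoke {G : Multigraph V E} {D : Finset E} {Q : Finset V} {C : Set V}
    (h : G.IsHubTree part D Q) (hC : C.Nonempty)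
    (hD : ∀ e ∈ D, ((G.inc e).map (· ∈ C)).IsDiag) : ∃ v ∈ Q, v ∈ C := by
  by_contra! hQ
  obtain ⟨v, hv⟩ := hC
  have hiso := (h.1 (Sum.inl v) (Sum.inr (part v))).apply_eq (Sum.elim (· ∈ C) fun _ => False) ?_
  · exact hiso.mp hv
  · rintro (e | w) hmem
    · rw [hub_inc_inl, Sym2.map_map]
      exact hD e (by simpa using hmem)
    · have hw : w ∉ C := hQ w (by simpa using hmem)
      simp [hub_inc_inr, hw]

-- The end of a matching edge that has lost its spoke is attached to the hub of the other end.
theorem exists_partner_part (part : V → κ) (f : μ ⊕ μ ↪ V) (t s : Finset μ) :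
    ∃ q : V → κ, (∀ v ∉ (t.disjSum s).map f, q v = part v) ∧
      (∀ e ∈ t, q (f (Sum.inl e)) = part (f (Sum.inr e))) ∧
      ∀ e ∈ s, q (f (Sum.inr e)) = part (f (Sum.inl e)) := by
  let partner : V → κ := Function.extend f (Sum.elim (part ∘ f ∘ Sum.inr) (part ∘ f ∘ Sum.inl)) part
  refine ⟨((t.disjSum s).map f).piecewise partner part,
    fun v hv => piecewise_eq_of_notMem _ _ _ hv, fun e he => ?_, fun e he => ?_⟩
  · exact (piecewise_eq_of_mem _ _ _ (by simpa using he)).trans (f.injective.extend_apply _ _ _)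
  · exact (piecewise_eq_of_mem _ _ _ (by simpa using he)).trans (f.injective.extend_apply _ _ _)

theorem isContraction_hub_of_partner_part [Fintype V] [DecidableEq μ] {q : V → κ}
    (hinc : ∀ e, X.inc e = s(f (Sum.inl e), f (Sum.inr e))) (hts : Disjoint t s)
    (hq : ∀ v ∉ (t.disjSum s).map f, q v = part v)
    (hqt : ∀ e ∈ t, q (f (Sum.inl e)) = part (f (Sum.inr e)))
    (hqs : ∀ e ∈ s, q (f (Sum.inr e)) = part (f (Sum.inl e))) :
    (X.hub part).IsContraction ↑((t ∪ s).disjSum ((t.disjSum s).map f)ᶜ) (Sum.elim q id) := by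
  have right_notMem {e : μ} (he : e ∈ t) : f (Sum.inr e) ∉ (t.disjSum s).map f := by
    simpa using disjoint_left.1 hts he
  have left_notMem {e : μ} (he : e ∈ s) : f (Sum.inl e) ∉ (t.disjSum s).map f := by
    simpa using disjoint_right.1 hts he
  generalize hR : (t.disjSum s).map f = R at *
  have reach_spoke {v : V} (hv : v ∉ R) :
      (X.hub part).Reach ↑((t ∪ s).disjSum Rᶜ) (Sum.inl v) (Sum.inr (part v)) :=
    reach_of_mem (e := Sum.inr v) (by simpa using hv) rfl
  have reach_edge {e : μ} (he : e ∈ t ∪ s) : (X.hub part).Reach ↑((t ∪ s).disjSum Rᶜ)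
      (Sum.inl (f (Sum.inl e))) (Sum.inl (f (Sum.inr e))) :=
    reach_of_mem (e := Sum.inl e) (by simpa using he) (by rw [hub_inc_inl, hinc, Sym2.map_mk])
  refine isContraction_of_section (σ := Sum.inr) (fun i => rfl) ?_ ?_
  · rintro (e | v) hmem
    · rw [mem_coe, inl_mem_disjSum, mem_union] at hmem
      obtain he | he := hmem
      · simp [hub_inc_inl, hinc, hqt e he, hq _ (right_notMem he)]
      · simp [hub_inc_inl, hinc, hqs e he, hq _ (left_notMem he)]
    · have hv : v ∉ R := by simpa using hmem
      simp [hub_inc_inr, hq v hv]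
  · rintro (v | i)
    · by_cases hv : v ∈ R
      · obtain ⟨e | e, he, rfl⟩ := mem_map.1 (hR ▸ hv)
        · rw [inl_mem_disjSum] at he
          rw [Sum.elim_inl, hqt e he]
          exact (reach_edge (mem_union_left s he)).trans (reach_spoke (right_notMem he))
        · rw [inr_mem_disjSum] at he
          rw [Sum.elim_inl, hqs e he]
          exact (reach_edge (mem_union_right t he)).symm.trans (reach_spoke (left_notMem he))
      · rw [Sum.elim_inl, hq v hv]
        exact reach_spoke hv
    · exact reach_refl _ _ _

variable [Fintype V] [Fintype μ]

theorem isHubTree_compl_map_disjSum_iff [Finite κ] [DecidableEq μ]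
    (hinc : ∀ e, X.inc e = s(f (Sum.inl e), f (Sum.inr e))) (hts : Disjoint t s) :
    X.IsHubTree part univ ((t.disjSum s).map f)ᶜ ↔ (X.push part).IsSpanningTree ↑(t ∪ s)ᶜ := by
  obtain ⟨q, hq, hqt, hqs⟩ := exists_partner_part part f t s
  have hcontr := isContraction_hub_of_partner_part hinc hts hq hqt hqs
  have hcard : #((t ∪ s).disjSum ((t.disjSum s).map f)ᶜ) + Nat.card κ = Nat.card (V ⊕ κ) := by
    have := card_add_card_compl ((t.disjSum s).map f)
    rw [card_map, card_disjSum] at this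
    rw [card_disjSum, card_union_of_disjoint hts, Nat.card_sum, Nat.card_eq_fintype_card (α := V)]
    omega
  have htree := hcontr.isHubTree_union_iff (disjoint_compl_right (a := t ∪ s))
    (disjoint_empty_right ((t.disjSum s).map f)ᶜ)
  rw [union_compl, union_empty, disjSum_empty, and_iff_right hcard] at htree
  rw [htree]
  refine isSpanningTree_map_iff _ fun e he => ?_
  obtain ⟨het, hes⟩ : e ∉ t ∧ e ∉ s := by simpa using he
  simp [push, hub_inc_inl, hinc, hq, het, hes]

theorem IsHubTree.exists_eq_map_disjSum (hinc : ∀ e, X.inc e = s(f (Sum.inl e), f (Sum.inr e)))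
    {R : Finset V} (h : X.IsHubTree part univ Rᶜ) :
    ∃ t s : Finset μ, Disjoint t s ∧ (t.disjSum s).map f = R := by
  have exists_notMem {C : Set V} (hne : C.Nonempty)
      (hC : ∀ e, f (Sum.inl e) ∈ C ↔ f (Sum.inr e) ∈ C) : ∃ v ∈ C, v ∉ R := by
    obtain ⟨v, hvR, hvC⟩ := h.exists_mem_spoke hne fun e _ => by simp [hinc, hC]
    exact ⟨v, hvC, by simpa using hvR⟩
  obtain ⟨S, -, rfl⟩ : ∃ S ⊆ univ, R = S.map f := by
    refine subset_map_iff.1 fun v hv => ?_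
    by_contra hvf
    simp only [mem_map, mem_univ, true_and, not_exists] at hvf
    obtain ⟨_, rfl, hvR⟩ := exists_notMem (Set.singleton_nonempty v) fun e => by simp [hvf]
    exact hvR hv
  refine ⟨S.toLeft, S.toRight, disjoint_left.2 fun e hel her => ?_, by rw [toLeft_disjSum_toRight]⟩
  rw [mem_toLeft] at hel
  rw [mem_toRight] at her
  obtain ⟨v, rfl | rfl, hv⟩ := exists_notMem (C := {f (Sum.inl e), f (Sum.inr e)}) (by simp)
    fun e' => by simp
  · exact hv (mem_map_of_mem f hel)
  · exact hv (mem_map_of_mem f her)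

theorem sum_isHubTree_compl_eq_sum_isSpanningTree [Finite κ] [DecidableEq μ] {β : Type*}
    [CommSemiring β]
    (hinc : ∀ e, X.inc e = s(f (Sum.inl e), f (Sum.inr e))) (y : V → β) :
    ∑ R : Finset V, (if X.IsHubTree part univ Rᶜ then ∏ v ∈ R, y v else 0) =
      ∑ T : Finset μ, if (X.push part).IsSpanningTree T then
        ∏ e ∈ Tᶜ, (y (f (Sum.inl e)) + y (f (Sum.inr e))) else 0 := by
  simp only [← sum_filter, prod_add]
  rw [sum_sigma']
  symm
  refine sum_bij (fun Tt _ => (Tt.2.disjSum (Tt.1ᶜ \ Tt.2)).map f) ?_ ?_ ?_ ?_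
  · rintro ⟨T, t⟩ hTt
    simp only [mem_sigma, mem_filter_univ, mem_powerset] at hTt ⊢
    rw [isHubTree_compl_map_disjSum_iff hinc disjoint_sdiff, union_sdiff_of_subset hTt.2,
      compl_compl]
    exact hTt.1
  · rintro ⟨T, t⟩ hTt ⟨T', t'⟩ hTt' heq
    simp only [mem_sigma, mem_powerset] at hTt hTt'
    have heq' := map_injective f heq
    have ht : t = t' := by simpa using congrArg toLeft heq'
    have hs : Tᶜ \ t = T'ᶜ \ t' := by simpa using congrArg toRight heq'
    have : Tᶜ = T'ᶜ := by
      rw [← union_sdiff_of_subset hTt.2, hs, ht, union_sdiff_of_subset hTt'.2]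
    rw [compl_inj_iff.1 this, ht]
  · intro R hR
    rw [mem_filter_univ] at hR
    obtain ⟨t, s, hts, rfl⟩ := hR.exists_eq_map_disjSum hinc
    refine ⟨⟨(t ∪ s)ᶜ, t⟩, ?_, ?_⟩
    · simp only [mem_sigma, mem_filter_univ, mem_powerset, compl_compl]
      exact ⟨(isHubTree_compl_map_disjSum_iff hinc hts).1 hR, subset_union_left⟩
    · rw [compl_compl, union_sdiff_cancel_left hts]
  · rintro ⟨T, t⟩ _
    rw [prod_map, prod_disjSum]

end Matching

section CliquePartition

variable {V E κ : Type*} {G : Multigraph V E} {part : V → κ}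

/-- The edges of `G` joining different parts of the vertex partition `part`. -/
def crossEdges (G : Multigraph V E) (part : V → κ) : Set E :=
  {e | ¬ ((G.inc e).map part).IsDiag}

/-- The spanning subgraph of `G` with edge set `M`. -/
def restrict (G : Multigraph V E) (M : Set E) : Multigraph V {e // e ∈ M} :=
  ⟨fun e => G.inc e⟩

theorem iUnion_lt_edgesBetween_eq_crossEdges [LinearOrder κ] (G : Multigraph V E) (part : V → κ) :
    ⋃ (i) (j) (_ : i < j), G.edgesBetween (part ⁻¹' {i}) (part ⁻¹' {j}) = G.crossEdges part := by
  ext e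
  simp only [Set.mem_iUnion, edgesBetween, crossEdges, Set.mem_ofPred_eq, Set.mem_preimage,
    Set.mem_singleton_iff]
  constructor
  · rintro ⟨i, j, hij, u, v, hinc, rfl, rfl⟩
    rw [hinc, Sym2.map_mk, Sym2.mk_isDiag_iff]
    exact hij.ne
  · intro he
    induction hinc : G.inc e with
    | _ u v =>
      rw [hinc, Sym2.map_mk, Sym2.mk_isDiag_iff] at he
      obtain hlt | hgt := lt_or_gt_of_ne he
      · exact ⟨_, _, hlt, u, v, rfl, rfl, rfl⟩
      · exact ⟨_, _, hgt, v, u, Sym2.eq_swap, rfl, rfl⟩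

theorem notMem_crossEdges_iff_exists_mem_edgesWithin {e : E} :
    e ∉ G.crossEdges part ↔ ∃ i, e ∈ G.edgesWithin (part ⁻¹' {i}) := by
  simp only [crossEdges, edgesWithin, Set.mem_ofPred_eq, not_not, Set.mem_preimage,
    Set.mem_singleton_iff]
  induction G.inc e with
  | _ u v =>
    simp only [Sym2.map_mk, Sym2.mk_isDiag_iff, Sym2.mem_iff, forall_eq_or_imp, forall_eq,
      exists_eq_left']
    exact eq_comm

theorem exists_embedding_ends_of_matching (ends : E → V × V)
    (hends : ∀ e, G.inc e = s((ends e).1, (ends e).2)) {M : Set E}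
    (hloop : ∀ e ∈ M, ¬ (G.inc e).IsDiag)
    (hM : ∀ e ∈ M, ∀ f ∈ M, e ≠ f → ∀ v : V, v ∈ G.inc e → v ∉ G.inc f) :
    ∃ f : {e // e ∈ M} ⊕ {e // e ∈ M} ↪ V,
      ∀ e, f (Sum.inl e) = (ends e).1 ∧ f (Sum.inr e) = (ends e).2 := by
  refine ⟨⟨Sum.elim (fun e => (ends e).1) fun e => (ends e).2, ?_⟩, fun e => ⟨rfl, rfl⟩⟩
  have fst_mem (e : E) : (ends e).1 ∈ G.inc e := by simp [hends]
  have snd_mem (e : E) : (ends e).2 ∈ G.inc e := by simp [hends]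
  have eq_of_mem {e f : {e // e ∈ M}} {v : V} (he : v ∈ G.inc e) (hf : v ∈ G.inc f) : e = f :=
    Subtype.ext <| by_contra fun hne => hM e e.2 f f.2 hne v he hf
  refine Function.Injective.sumElim (fun e f hef => ?_) (fun e f hef => ?_) fun e f hef => ?_
  · exact eq_of_mem (fst_mem e) (hef ▸ fst_mem f)
  · exact eq_of_mem (snd_mem e) (hef ▸ snd_mem f)
  · obtain rfl := eq_of_mem (fst_mem e) (hef ▸ snd_mem f)
    exact hloop e e.2 (by simp [hends, hef])

theorem isHubTree_restrict_iff {M : Set E} [Fintype M] {Q : Finset V} :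
    (G.restrict M).IsHubTree part univ Q ↔ G.IsHubTree part M.toFinset Q := by
  have hmap : M.toFinset.disjSum Q = ((univ : Finset M).disjSum Q).map
      ((Function.Embedding.subtype (· ∈ M)).sumMap (Function.Embedding.refl V)) := by
    ext (_ | _) <;> simp
  rw [IsHubTree, IsHubTree, hmap]
  refine (isSpanningTree_map_iff _ ?_).symm
  rintro (_ | _) - <;> rfl

variable [Fintype E]

theorem IsClique.isCompleteOn {U : Finset V} (h : G.IsClique U) :
    G.IsCompleteOn {e | e ∈ G.edgesWithin U} U := by
  have exists_ends {e : E} (he : e ∈ G.edgesWithin U) :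
      ∃ u ∈ U, ∃ v ∈ U, u ≠ v ∧ G.inc e = s(u, v) := by
    have hloop := h.2 e he
    simp only [edgesWithin, Set.mem_ofPred_eq] at he
    induction hinc : G.inc e with
    | _ u v =>
      simp only [hinc, Sym2.mem_iff, forall_eq_or_imp, forall_eq, Sym2.mk_isDiag_iff] at he hloop
      exact ⟨u, he.1, v, he.2, hloop, rfl⟩
  refine ⟨fun e he => ?_, fun e he f hf hef => ?_, ?_⟩
  · rw [mem_coe, mem_filter_univ] at he
    exact ⟨h.2 e he, he⟩
  · rw [mem_coe, mem_filter_univ] at he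
    obtain ⟨u, hu, v, hv, huv, hinc⟩ := exists_ends he
    exact (h.1 u hu v hv huv).unique hinc (hef ▸ hinc)
  · rintro z ⟨hz, hzU⟩
    induction z with
    | _ u v =>
      simp only [Sym2.mk_isDiag_iff, Sym2.mem_iff, forall_eq_or_imp, forall_eq] at hz hzU
      obtain ⟨e, hinc, -⟩ := h.1 u hzU.1 v hzU.2 hz
      exact ⟨e, by simpa [edgesWithin, hinc] using hzU, hinc⟩

theorem tau_coe_eq_card (M : Finset E) :
    G.tau M = #{F ∈ Mᶜ.powerset | G.IsSpanningTree ↑(M ∪ F)} := by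
  rw [tau, ← Set.ncard_coe_finset]
  refine (Set.ncard_congr (fun F _ => ↑(M ∪ F)) ?_ ?_ ?_).symm
  · intro F hF
    exact ⟨(mem_filter.1 hF).2, coe_subset.2 subset_union_left⟩
  · intro F F' hF hF' heq
    simp only [coe_filter, mem_powerset, Set.mem_ofPred_eq,
      subset_compl_iff_disjoint_left] at hF hF'
    rw [← union_sdiff_cancel_left hF.1, coe_injective heq, union_sdiff_cancel_left hF'.1]
  · rintro T ⟨hT, hMT⟩
    obtain ⟨T, rfl⟩ := T.toFinite.exists_finset_coe
    have hunion : M ∪ T \ M = T := union_sdiff_of_subset (coe_subset.1 hMT)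
    refine ⟨T \ M, ?_, congrArg _ hunion⟩
    simp only [coe_filter, mem_powerset, Set.mem_ofPred_eq, hunion]
    exact ⟨subset_compl_iff_disjoint_left.2 disjoint_sdiff, hT⟩

theorem finsum_ST_eq_sum {W μ β : Type*} [Fintype μ] [DecidableEq μ] [CommSemiring β]
    (Y : Multigraph W μ) (g : μ → β) : ∑ᶠ T ∈ Y.ST ∅, ∏ᶠ e ∈ {f | f ∉ T}, g e =
      ∑ T : Finset μ, if Y.IsSpanningTree T then ∏ e ∈ Tᶜ, g e else 0 := by
  have hprod (T : Finset μ) : ∏ᶠ e ∈ {f | f ∉ (T : Set μ)}, g e = ∏ e ∈ Tᶜ, g e := by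
    rw [← finprod_mem_coe_finset, coe_compl]
    rfl
  have hST : Y.ST ∅ = Set.image (fun T : Finset μ => (T : Set μ))
      ↑(univ.filter fun T : Finset μ => Y.IsSpanningTree T) := by
    ext T
    obtain ⟨T, rfl⟩ := T.toFinite.exists_finset_coe
    simp [ST]
  rw [hST, finsum_mem_image coe_injective.injOn, finsum_mem_coe_finset, sum_filter]
  simp only [hprod]

variable [Fintype V]

theorem prod_sq_mul_tau_crossEdges [Fintype κ] (hpart : Function.Surjective part)
    (hclique : ∀ i, G.IsClique (part ⁻¹' {i})) :
    (∏ i, #{v | part v = i} ^ 2) * G.tau (G.crossEdges part) =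
      ∑ P, if (G.restrict (G.crossEdges part)).IsHubTree part univ P then
        ∏ v ∈ P, #{w | part w = part v} else 0 := by
  obtain ⟨r, hr⟩ := hpart.hasRightInverse
  set K : κ → Finset E := fun i => {e | e ∈ G.edgesWithin (part ⁻¹' {i})}
  have coe_fibre (i : κ) : (↑({v | part v = i} : Finset V) : Set V) = part ⁻¹' {i} := by
    ext v
    simp
  have hK (i : κ) : G.IsCompleteOn (K i) {v | part v = i} := by
    have := IsClique.isCompleteOn (U := {v | part v = i}) (by rw [coe_fibre]; exact hclique i)
    rwa [coe_fibre] at this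
  have biUnion_K : univ.biUnion K = (G.crossEdges part).toFinsetᶜ := by
    ext e
    simp [K, notMem_crossEdges_iff_exists_mem_edgesWithin]
  have hD (i : κ) : Disjoint (G.crossEdges part).toFinset (K i) := by
    rw [← le_compl_iff_disjoint_left, ← biUnion_K]
    exact subset_biUnion_of_mem K (mem_univ i)
  have key := prod_sq_mul_card_isHubTree (Q := ∅) (I := univ) (fun i _ => hK i) (fun i _ => hD i)
    (by simp) fun i _ => hr i
  simp only [empty_union, isHubTree_image_section_iff hr, biUnion_K, mem_univ, filter_true,
    powerset_univ, ← tau_coe_eq_card, Set.coe_toFinset, ← isHubTree_restrict_iff] at key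
  exact key

theorem sum_isHubTree_eq_prod_mul_sum_isSpanningTree {μ β : Type*} [Fintype μ] [DecidableEq μ]
    [Finite κ] [Field β] {X : Multigraph V μ} {f : μ ⊕ μ ↪ V}
    (hinc : ∀ e, X.inc e = s(f (Sum.inl e), f (Sum.inr e))) {x : V → β} (hx : ∀ v, x v ≠ 0) :
    ∑ P, (if X.IsHubTree part univ P then ∏ v ∈ P, x v else 0) =
      (∏ v, x v) * ∑ T : Finset μ, if (X.push part).IsSpanningTree T then
        ∏ e ∈ Tᶜ, ((x (f (Sum.inl e)))⁻¹ + (x (f (Sum.inr e)))⁻¹) else 0 := by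
  have prod_compl (R : Finset V) : ∏ v ∈ Rᶜ, x v = (∏ v, x v) * ∏ v ∈ R, (x v)⁻¹ := by
    rw [← prod_compl_mul_prod R, mul_assoc, ← prod_mul_distrib,
      prod_congr rfl fun v _ => mul_inv_cancel₀ (hx v), prod_const_one, mul_one]
  rw [← sum_isHubTree_compl_eq_sum_isSpanningTree hinc fun v => (x v)⁻¹, mul_sum,
    ← Equiv.sum_comp compl_involutive.toPerm]
  refine sum_congr rfl fun R _ => ?_
  rw [Function.Involutive.coe_toPerm, mul_ite, mul_zero, prod_compl]

theorem tau_crossEdges_eq [Fintype κ] (hpart : Function.Surjective part)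
    (hclique : ∀ i, G.IsClique (part ⁻¹' {i}))
    {f : {e // e ∈ G.crossEdges part} ⊕ {e // e ∈ G.crossEdges part} ↪ V}
    (hf : ∀ e : {e // e ∈ G.crossEdges part}, G.inc e = s(f (Sum.inl e), f (Sum.inr e))) :
    (G.tau (G.crossEdges part) : ℚ) =
      (∏ i, (#{v | part v = i} : ℚ) ^ ((#{v | part v = i} : ℤ) - 2)) *
        ∑ T : Finset {e // e ∈ G.crossEdges part},
          if ((G.restrict (G.crossEdges part)).push part).IsSpanningTree T then
            ∏ e ∈ Tᶜ, ((#{w | part w = part (f (Sum.inl e))} : ℚ)⁻¹ +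
              (#{w | part w = part (f (Sum.inr e))} : ℚ)⁻¹) else 0 := by
  have card_ne_zero (i : κ) : (#{v | part v = i} : ℚ) ≠ 0 := by
    obtain ⟨v, rfl⟩ := hpart i
    exact Nat.cast_ne_zero.2 (card_ne_zero_of_mem ((mem_filter_univ v).2 rfl))
  have hexchange := congrArg (Nat.cast (R := ℚ)) (prod_sq_mul_tau_crossEdges hpart hclique)
  push_cast at hexchange
  rw [sum_isHubTree_eq_prod_mul_sum_isSpanningTree (X := G.restrict (G.crossEdges part)) hf
    fun v => card_ne_zero (part v)] at hexchange
  have prod_pow : ∏ v, (#{w | part w = part v} : ℚ) = (∏ i, (#{v | part v = i} : ℚ) ^ 2) *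
      ∏ i, (#{v | part v = i} : ℚ) ^ ((#{v | part v = i} : ℤ) - 2) := by
    rw [← prod_mul_distrib, ← prod_fiberwise' univ part fun i => (#{w | part w = i} : ℚ)]
    refine prod_congr rfl fun i _ => ?_
    rw [prod_const, ← zpow_natCast _ 2, ← zpow_add₀ (card_ne_zero i), ← zpow_natCast]
    congr 1
    push_cast
    ring
  rw [prod_pow, mul_assoc] at hexchange
  exact mul_left_cancel₀ (prod_ne_zero_iff.2 fun i _ => pow_ne_zero 2 (card_ne_zero i)) hexchange

end CliquePartition

end Multigraph

theorem tau_matching_between_cliques_general {V E κ : Type*} [Finite V] [Finite E] [Fintype κ]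
    (G : Multigraph V E) (part : V → κ)
    (hne : ∀ i, (part ⁻¹' {i}).Nonempty)
    (hclique : ∀ i, G.IsClique (part ⁻¹' {i}))
    (M₀ : Set E) (hM₀ : M₀ = G.crossEdges part)
    (hmatching : ∀ e ∈ M₀, ∀ f ∈ M₀, e ≠ f → ∀ v : V, v ∈ G.inc e → v ∉ G.inc f)
    (ends : E → V × V) (hends : ∀ e, G.inc e = s((ends e).1, (ends e).2))
    (Gstar : Multigraph κ {e : E // e ∈ M₀})
    (hGstar : ∀ e : {e : E // e ∈ M₀}, Gstar.inc e = (G.inc e.val).map part) :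
    (G.tau M₀ : ℚ) =
      (∏ i : κ, ((part ⁻¹' {i}).ncard : ℚ) ^ (((part ⁻¹' {i}).ncard : ℤ) - 2)) *
        ∑ᶠ T ∈ Gstar.ST ∅,
          ∏ᶠ e ∈ {f : {e : E // e ∈ M₀} | f ∉ T},
            ((((part ⁻¹' {part (ends e.val).1}).ncard : ℚ))⁻¹ +
              (((part ⁻¹' {part (ends e.val).2}).ncard : ℚ))⁻¹) := by
  subst hM₀
  classical
  obtain ⟨_⟩ := nonempty_fintype V
  obtain ⟨_⟩ := nonempty_fintype E
  obtain rfl : Gstar = (G.restrict (G.crossEdges part)).push part :=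
    congrArg Multigraph.mk (funext hGstar)
  have hloop (e : E) (he : e ∈ G.crossEdges part) : ¬ (G.inc e).IsDiag := fun h => he h.map
  obtain ⟨f, hf⟩ := exists_embedding_ends_of_matching ends hends hloop hmatching
  have card_fibre (i : κ) : (part ⁻¹' {i}).ncard = Finset.card {v | part v = i} := by
    rw [← Set.ncard_coe_finset]
    congr 1
    ext v
    simp
  have hinc (e : {e // e ∈ G.crossEdges part}) : G.inc e = s(f (Sum.inl e), f (Sum.inr e)) := by
    rw [(hf e).1, (hf e).2, hends]
  rw [finsum_ST_eq_sum, tau_crossEdges_eq hne hclique hinc]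
  simp only [card_fibre, (hf _).1, (hf _).2]

/-- formula for `τ_G(M₀)` when the vertex set of `G` is
partitioned into cliques `V₁, …, V_k` and the set `M₀` of edges between
distinct cliques is a matching. -/
theorem tau_matching_between_cliques {V : Type u} {E : Type v}
    [Fintype V] [Fintype E]
    (G : Multigraph V E) (hconn : G.Connected) (hloop : G.Loopless)
    (k : ℕ) (part : V → Fin k)
    (hne : ∀ i, (part ⁻¹' {i}).Nonempty)
    (hclique : ∀ i, G.IsClique (part ⁻¹' {i}))
    (M₀ : Set E)
    (hM₀ : M₀ = ⋃ (i : Fin k), ⋃ (j : Fin k), ⋃ (_ : i < j),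
      G.edgesBetween (part ⁻¹' {i}) (part ⁻¹' {j}))
    (hmatching : ∀ e ∈ M₀, ∀ f ∈ M₀, e ≠ f → ∀ v : V, v ∈ G.inc e → v ∉ G.inc f)
    (ends : E → V × V) (hends : ∀ e, G.inc e = s((ends e).1, (ends e).2))
    (Gstar : Multigraph (Fin k) {e : E // e ∈ M₀})
    (hGstar : ∀ e : {e : E // e ∈ M₀}, Gstar.inc e = (G.inc e.val).map part) :
    (G.tau M₀ : ℚ) =
      (∏ i : Fin k, ((part ⁻¹' {i}).ncard : ℚ) ^ (((part ⁻¹' {i}).ncard : ℤ) - 2)) *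
        ∑ᶠ T ∈ Gstar.ST ∅,
          ∏ᶠ e ∈ {f : {e : E // e ∈ M₀} | f ∉ T},
            ((((part ⁻¹' {part (ends e.val).1}).ncard : ℚ))⁻¹ +
              (((part ⁻¹' {part (ends e.val).2}).ncard : ℚ))⁻¹) := by
  exact tau_matching_between_cliques_general G part hne hclique M₀
    (hM₀.trans (iUnion_lt_edgesBetween_eq_crossEdges G part)) hmatching ends hends Gstar hGstar

end PaperST
end

section
/- Let G = (V,E) be a connected loopless multigraph whose vertex set is partitioned into nonempty sets V_0, V_1, ..., V_k such that: each V_i (1 ≤ i ≤ k) is a clique of G; E_G(V_i,V_j) = ∅ for all 1 ≤ i < j ≤ k; and each component of G[M] is a star with center in V_0, where M_i = E_G(V_i,V_0) and M = M_1 ∪ ... ∪ M_k. Let U = V_1 ∪ ... ∪ V_k and G•U the contraction of all clique edges, with v_i the vertex arising from V_i. Then for any R ⊆ M and N ⊆ E(G − U): τ_G(R ∪ N) = (∏_{i=1}^k |V_i|^{|V_i| − 2}) · Σ_{T ∈ ST_{G•U}(N)} ∏_{i=1}^k |V_i|^{−|M_i − E(T)|} · (1 + |V_i|)^{|(M_i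 − R) − E(T)|}. -/
/-!
Spanning trees of multigraphs: common definitions.

A multigraph on a vertex type `V` with edge type `E` is given by an incidence
map `inc : E → Sym2 V` sending each edge to its (unordered) pair of endpoints.
-/

namespace PaperST

universe u v

open Multigraph

/-!
Contract the cliques one at a time. A spanning tree of `G` meets a clique `K` on `n` vertices in a
set `F`, and given its remaining edges `W`, the possible `F` are the spanning trees of `K` with the
classes connected by `W` identified; for `q` classes there are `n ^ (q - 2)` of them per transversal
of the classes (induct on `q` by contracting an edge). Every vertex of `K` meets at most one edge
leaving `K`, so a transversal is obtained by deleting from `K` the ends of a set `D` of boundary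
edges in `W`, and these are exactly the `D` for which `W \ D` is a spanning tree `T` of the
contraction. Since `|D| = n - q`, the tree `T` receives the weight
`n ^ (n - 2) * ∑ D, n ^ (-|D|)`, where `D` ranges over the sets of boundary edges outside `T` that
contain the prescribed ones, and the binomial theorem evaluates this sum.
-/

open Finset

section Setoids

variable {V : Type*} {s : Setoid V} {K X : Set V} {x y : V}

/-- The equivalence relation whose only possibly nontrivial class is `K`. Joining it to `s`
identifies the points of `K` in `Quotient s`. The inequality `s ≤ collapse Kᶜ` says that every point
of `K` is an `s`-class of its own. -/
def collapse (K : Set V) : Setoid V where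
  r u v := u = v ∨ u ∈ K ∧ v ∈ K
  iseqv := ⟨fun _ => .inl rfl, by grind, by grind⟩

theorem collapse_apply {u v : V} : collapse K u v ↔ u = v ∨ u ∈ K ∧ v ∈ K := Iff.rfl

theorem collapse_le_iff : collapse K ≤ s ↔ ∀ a ∈ K, ∀ b ∈ K, s a b := by
  refine ⟨fun h a ha b hb => h (.inr ⟨ha, hb⟩), fun h a b => ?_⟩
  rintro (rfl | ⟨ha, hb⟩)
  exacts [s.refl' _, h a ha b hb]

theorem collapse_mono {L : Set V} (h : K ⊆ L) : collapse K ≤ collapse L :=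
  collapse_le_iff.2 fun _ ha _ hb => .inr ⟨h ha, h hb⟩

theorem sup_collapse_apply {u v : V} :
    (s ⊔ collapse K) u v ↔ s u v ∨ (∃ a ∈ K, s u a) ∧ ∃ b ∈ K, s v b := by
  let t : Setoid V :=
    { r := fun u v => s u v ∨ (∃ a ∈ K, s u a) ∧ ∃ b ∈ K, s v b
      iseqv := by
        have refl := s.refl'
        have symm := @s.symm'
        have trans := @s.trans'
        exact ⟨by grind, by grind, by grind⟩ }
  have le_t : s ⊔ collapse K ≤ t :=
    sup_le (fun _ _ h => .inl h)
      (collapse_le_iff.2 fun a ha b hb => .inr ⟨⟨a, ha, s.refl' a⟩, b, hb, s.refl' b⟩)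
  refine ⟨fun h => le_t h, ?_⟩
  rintro (h | ⟨⟨a, ha, hua⟩, b, hb, hvb⟩)
  · exact (le_sup_left : s ≤ s ⊔ collapse K) h
  · have s_le := (le_sup_left : s ≤ s ⊔ collapse K)
    have hab : (s ⊔ collapse K) a b := (le_sup_right : collapse K ≤ _) (.inr ⟨ha, hb⟩)
    exact Setoid.trans' _ (s_le hua) (Setoid.trans' _ hab (s_le (s.symm' hvb)))

theorem sup_collapse_pair_apply {u v : V} :
    (s ⊔ collapse {x, y}) u v ↔ s u v ∨ (s u x ∨ s u y) ∧ (s v x ∨ s v y) := by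
  simp [sup_collapse_apply]

theorem sup_collapse_eq_top_iff (hK : K.Nonempty) :
    s ⊔ collapse K = ⊤ ↔ ∀ v, ∃ a ∈ K, s v a := by
  obtain ⟨b, hb⟩ := hK
  rw [Setoid.eq_top_iff]
  refine ⟨fun h v => ?_, fun h u v => sup_collapse_apply.2 (.inr ⟨h u, h v⟩)⟩
  rcases sup_collapse_apply.1 (h v b) with hvb | ⟨hv, -⟩
  exacts [⟨b, hb, hvb⟩, hv]

theorem card_quotient_eq_one_iff [Nonempty V] : Nat.card (Quotient s) = 1 ↔ s = ⊤ := by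
  rw [Nat.card_eq_one_iff_unique, ← Quotient.subsingleton_iff, and_iff_left_iff_imp]
  exact fun _ => (‹Nonempty V›).map (Quotient.mk s)

theorem injOn_mk_of_le_collapse_compl (h : s ≤ collapse Kᶜ) :
    K.InjOn (Quotient.mk s) := by
  intro a ha b _ hab
  rcases h (Quotient.exact hab) with rfl | ⟨ha', -⟩
  exacts [rfl, absurd ha ha']

theorem surjOn_mk_iff : X.SurjOn (Quotient.mk s) Set.univ ↔ ∀ v, ∃ a ∈ X, s v a := by
  refine ⟨fun h v => ?_, fun h q _ => ?_⟩
  · obtain ⟨a, ha, hav⟩ := h (Set.mem_univ (Quotient.mk s v))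
    exact ⟨a, ha, s.symm' (Quotient.exact hav)⟩
  · obtain ⟨v, rfl⟩ := Quotient.exists_rep q
    obtain ⟨a, ha, hva⟩ := h v
    exact ⟨a, ha, Quotient.sound (s.symm' hva)⟩

/-- `X` is a transversal of `s`: it meets every class of `s` in exactly one point. -/
def IsTransversal (s : Setoid V) (X : Set V) : Prop :=
  ∀ v, ∃! a, a ∈ X ∧ s v a

theorem isTransversal_iff_bijOn : IsTransversal s X ↔ X.BijOn (Quotient.mk s) Set.univ := by
  refine ⟨fun h => ⟨Set.mapsTo_univ _ _, fun a ha b hb hab => ?_, ?_⟩, fun h v => ?_⟩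
  · exact (h a).unique ⟨ha, s.refl' a⟩ ⟨hb, Quotient.exact hab⟩
  · exact surjOn_mk_iff.2 fun v => (h v).exists
  · obtain ⟨a, ha, hva⟩ := surjOn_mk_iff.1 h.surjOn v
    refine ⟨a, ⟨ha, hva⟩, fun b ⟨hb, hvb⟩ => h.injOn hb ha (Quotient.sound ?_)⟩
    exact s.trans' (s.symm' hvb) hva

theorem IsTransversal.ncard_eq (h : IsTransversal s X) : X.ncard = Nat.card (Quotient s) := by
  rw [(isTransversal_iff_bijOn.1 h).ncard_eq, Set.ncard_univ]

theorem isTransversal_univ_bot : IsTransversal (⊥ : Setoid V) Set.univ := fun v =>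
  ⟨v, ⟨Set.mem_univ v, rfl⟩, fun _ h => h.2.symm⟩

theorem IsTransversal.sup_collapse (h : IsTransversal s X) (hKX : K ⊆ X) {a : V} (ha : a ∈ K) :
    IsTransversal (s ⊔ collapse K) (insert a (X \ K)) := by
  intro v
  obtain ⟨b, ⟨hb, hvb⟩, hb_unique⟩ := h v
  have unique : ∀ c ∈ X, s v c → c = b := fun c hc hvc => hb_unique c ⟨hc, hvc⟩
  have rel_unique : ∀ c ∈ X, ∀ d ∈ X, s c d → c = d := fun c hc d hd hcd =>
    (h c).unique ⟨hc, s.refl' c⟩ ⟨hd, hcd⟩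
  have refl := s.refl'
  by_cases hbK : b ∈ K
  · refine ⟨a, ⟨by simp, sup_collapse_apply.2 (.inr ⟨⟨b, hbK, hvb⟩, a, ha, refl a⟩)⟩, ?_⟩
    simp only [sup_collapse_apply]
    grind
  · refine ⟨b, ⟨by simp [hb, hbK], sup_collapse_apply.2 (.inl hvb)⟩, ?_⟩
    simp only [sup_collapse_apply]
    grind

theorem exists_isTransversal_superset (hK : K.InjOn (Quotient.mk s)) :
    ∃ X, K ⊆ X ∧ IsTransversal s X := by
  obtain ⟨X, hKX, hX⟩ := hK.bijOn_image.exists_extend (Set.subset_univ _)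
    (by rw [Quotient.mk_surjective.range_eq])
  exact ⟨X, hKX, isTransversal_iff_bijOn.2 hX⟩

section Finite

variable [Finite V]

theorem card_quotient_le_ncard (h : ∀ v, ∃ a ∈ X, s v a) :
    Nat.card (Quotient s) ≤ X.ncard := by
  rw [← Set.ncard_univ, ← (surjOn_mk_iff.2 h).image_eq_of_mapsTo (Set.mapsTo_univ _ _)]
  exact Set.ncard_image_le

theorem isTransversal_of_ncard_le (h : ∀ v, ∃ a ∈ X, s v a)
    (hX : X.ncard ≤ Nat.card (Quotient s)) : IsTransversal s X := by
  have surj := surjOn_mk_iff.2 h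
  have inj : X.InjOn (Quotient.mk s) := by
    refine Set.injOn_of_ncard_image_eq (le_antisymm Set.ncard_image_le ?_)
    rwa [surj.image_eq_of_mapsTo (Set.mapsTo_univ _ _), Set.ncard_univ]
  exact isTransversal_iff_bijOn.2 ⟨Set.mapsTo_univ _ _, inj, surj⟩

theorem card_quotient_sup_collapse (hK : K.InjOn (Quotient.mk s)) (hne : K.Nonempty) :
    Nat.card (Quotient (s ⊔ collapse K)) + K.ncard = Nat.card (Quotient s) + 1 := by
  obtain ⟨X, hKX, hX⟩ := exists_isTransversal_superset hK
  obtain ⟨a, ha⟩ := hne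
  rw [← (hX.sup_collapse hKX ha).ncard_eq, ← hX.ncard_eq, Set.ncard_insert_of_notMem (by simp [ha]),
    ← Set.ncard_sdiff_add_ncard_of_subset hKX]
  ring

theorem card_quotient_sup_collapse_pair (h : ¬ s x y) :
    Nat.card (Quotient s) = Nat.card (Quotient (s ⊔ collapse {x, y})) + 1 := by
  have hxy : x ≠ y := fun hxy => h (hxy ▸ s.refl' x)
  have hinj : ({x, y} : Set V).InjOn (Quotient.mk s) := by
    rw [Set.injOn_pair]
    exact fun hmk => absurd (Quotient.exact hmk) h
  have := card_quotient_sup_collapse hinj (Set.insert_nonempty x {y})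
  rw [Set.ncard_pair hxy] at this
  omega

end Finite

theorem isTransversal_insert_iff (hxy : ¬ s x y) (hy : y ∉ X) :
    IsTransversal s (insert y X) ↔
      IsTransversal (s ⊔ collapse {x, y}) X ∧ ∃ a ∈ X, s x a := by
  have symm := @s.symm'
  have trans := @s.trans'
  simp only [IsTransversal, sup_collapse_pair_apply, ExistsUnique]
  constructor
  · intro h
    obtain ⟨a, ha, ha_unique⟩ := h x
    have haX : a ∈ X := by grind
    refine ⟨fun v => ?_, a, haX, ha.2⟩
    obtain ⟨b, hb, hb_unique⟩ := h v
    have h_eq_y : ∀ c ∈ X, ¬ s c y := by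
      intro c hc hcy
      obtain ⟨d, -, hd_unique⟩ := h y
      grind
    by_cases hby : b = y
    · exact ⟨a, by grind⟩
    · exact ⟨b, by grind⟩
  · rintro ⟨h, a, ha, hxa⟩ v
    obtain ⟨b, hb, hb_unique⟩ := h v
    obtain ⟨c, hc, hc_unique⟩ := h x
    by_cases hvy : s v y
    · exact ⟨y, by grind⟩
    · exact ⟨b, by grind⟩

section Counting

variable [Fintype V]

open Classical in
/-- The transversals of `s` contained in `K`. -/
noncomputable def transversals (s : Setoid V) (K : Set V) : Finset (Set V) :=
  {X | X ⊆ K ∧ IsTransversal s X}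

theorem mem_transversals : X ∈ transversals s K ↔ X ⊆ K ∧ IsTransversal s X := by
  simp [transversals]

open Classical in
theorem card_transversals_filter_mem (hxy : ¬ s x y) (hy : y ∈ K) :
    #{X ∈ transversals s K | y ∈ X} =
      #{X ∈ transversals (s ⊔ collapse {x, y}) K | ∃ a ∈ X, s x a} := by
  have y_notMem : ∀ X, IsTransversal (s ⊔ collapse {x, y}) X → (∃ a ∈ X, s x a) → y ∉ X := by
    rintro X hX ⟨a, ha, hxa⟩ hyX
    have hay : a = y := (hX x).unique ⟨ha, sup_collapse_pair_apply.2 (.inl hxa)⟩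
      ⟨hyX, sup_collapse_pair_apply.2 (.inr ⟨.inl (s.refl' x), .inr (s.refl' y)⟩)⟩
    exact hxy (hay ▸ hxa)
  refine card_nbij' (· \ {y}) (insert y) ?_ ?_ ?_ ?_
  · intro X hX
    simp only [coe_filter, mem_transversals, Set.mem_ofPred_eq] at hX ⊢
    have h := (isTransversal_insert_iff (X := X \ {y}) hxy (by simp)).1
      (by rw [Set.insert_sdiff_singleton, Set.insert_eq_of_mem hX.2]; exact hX.1.2)
    exact ⟨⟨Set.sdiff_subset.trans hX.1.1, h.1⟩, h.2⟩
  · intro X hX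
    simp only [coe_filter, mem_transversals, Set.mem_ofPred_eq] at hX ⊢
    have hyX := y_notMem X hX.1.2 hX.2
    exact ⟨⟨Set.insert_subset hy hX.1.1, (isTransversal_insert_iff hxy hyX).2 ⟨hX.1.2, hX.2⟩⟩,
      Set.mem_insert y X⟩
  · intro X hX
    exact Set.insert_sdiff_self_of_mem (mem_filter.1 hX).2
  · intro X hX
    simp only [coe_filter, mem_transversals, Set.mem_ofPred_eq] at hX
    exact Set.insert_sdiff_self_of_notMem (y_notMem X hX.1.2 hX.2)

open Classical in
theorem card_transversals_sup_collapse_pair (hxy : ¬ s x y) (hx : x ∈ K) (hy : y ∈ K) :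
    #(transversals (s ⊔ collapse {x, y}) K) =
      #{X ∈ transversals s K | x ∈ X} + #{X ∈ transversals s K | y ∈ X} := by
  have hyx : ¬ s y x := fun h => hxy (s.symm' h)
  rw [add_comm, card_transversals_filter_mem hxy hy, card_transversals_filter_mem hyx hx,
    Set.pair_comm y x, ← card_filter_add_card_filter_not (fun X => ∃ a ∈ X, s x a)]
  congr 2
  refine filter_congr fun X hX => ?_
  have hXx := (mem_transversals.1 hX).2 x
  simp only [sup_collapse_pair_apply, ExistsUnique] at hXx
  obtain ⟨a, ⟨ha, hxa⟩, ha_unique⟩ := hXx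
  have refl := s.refl'
  have symm := @s.symm'
  have trans := @s.trans'
  grind

theorem card_transversals_top [Nonempty V] (K : Set V) :
    #(transversals (⊤ : Setoid V) K) = K.ncard := by
  classical
  have h : transversals (⊤ : Setoid V) K = K.toFinset.image ({·}) := by
    ext X
    simp only [mem_transversals, IsTransversal, Setoid.top_def, Pi.top_apply, Prop.top_eq_true,
      and_true, forall_const, mem_image, Set.mem_toFinset, ← Set.singleton_iff_unique_mem]
    grind
  rw [h, card_image_of_injective _ Set.singleton_injective, Set.ncard_eq_toFinset_card']

open Classical in
theorem IsTransversal.card_filter_not_rel {m : ℕ} (h : IsTransversal s X)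
    (hm : Nat.card (Quotient s) = m + 1) (b : V) : #{a | a ∈ X ∧ ¬ s a b} = m := by
  obtain ⟨c, ⟨hc, hbc⟩, hc_unique⟩ := h b
  have h_erase : ({a | a ∈ X ∧ ¬ s a b} : Finset V) = X.toFinset.erase c := by
    ext a
    simp only [mem_filter, mem_univ, true_and, mem_erase, Set.mem_toFinset]
    have symm := @s.symm'
    grind
  rw [h_erase, card_erase_of_mem (Set.mem_toFinset.2 hc), ← Set.ncard_eq_toFinset_card',
    h.ncard_eq, hm, Nat.add_sub_cancel]

open Classical in
theorem sum_card_transversals_filter_mem_mul {m : ℕ} (hm : Nat.card (Quotient s) = m + 1)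
    (K : Set V) :
    ∑ a with a ∈ K, #{X ∈ transversals s K | a ∈ X} * #{b | b ∈ K ∧ ¬ s a b} =
      m * K.ncard * #(transversals s K) := by
  calc ∑ a with a ∈ K, #{X ∈ transversals s K | a ∈ X} * #{b | b ∈ K ∧ ¬ s a b}
      = ∑ a with a ∈ K, ∑ X ∈ transversals s K with a ∈ X, #{b | b ∈ K ∧ ¬ s a b} := by
        simp only [sum_const, smul_eq_mul]
    _ = ∑ X ∈ transversals s K, ∑ a with a ∈ X, #{b | b ∈ K ∧ ¬ s a b} := by
        refine sum_comm' fun a X => ?_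
        simp only [mem_filter, mem_univ, true_and]
        exact ⟨fun h => ⟨h.2.2, h.2.1⟩, fun h => ⟨(mem_transversals.1 h.2).1 h.1, h.2, h.1⟩⟩
    _ = ∑ X ∈ transversals s K, ∑ b with b ∈ K, #{a | a ∈ X ∧ ¬ s a b} := by
        refine sum_congr rfl fun X _ => ?_
        simp only [← filter_filter]
        exact sum_card_bipartiteAbove_eq_sum_card_bipartiteBelow fun a b => ¬ s a b
    _ = ∑ _X ∈ transversals s K, ∑ b with b ∈ K, m :=
        sum_congr rfl fun X hX => sum_congr rfl fun b _ =>
          (mem_transversals.1 hX).2.card_filter_not_rel hm b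
    _ = m * K.ncard * #(transversals s K) := by
        rw [sum_const, sum_const, Set.ncard_eq_toFinset_card', Set.filter_mem_univ_eq_toFinset,
          smul_eq_mul, smul_eq_mul]
        ring

end Counting

end Setoids

namespace Multigraph

section SpanningTrees

variable {V : Type*} {E : Type*} (G : Multigraph V E) {s : Setoid V}

theorem contractSetoid_eq_iSup (W : Set E) :
    G.contractSetoid W = ⨆ e ∈ W, collapse (G.inc e : Set V) := by
  apply le_antisymm
  · intro u v huv
    induction huv with
    | refl => exact Setoid.refl' _ u
    | @tail w x _ hwx ih =>
      obtain ⟨e, he, hinc⟩ := hwx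
      have hwx : collapse (G.inc e : Set V) w x := by simp [collapse_apply, hinc]
      exact Setoid.trans' _ ih (le_iSup₂ (f := fun e _ => collapse (G.inc e : Set V)) e he hwx)
  · refine iSup₂_le fun e he => collapse_le_iff.2 fun a ha b hb => ?_
    by_cases hab : a = b
    · exact hab ▸ Setoid.refl' _ a
    · exact .single ⟨e, he, (Sym2.mem_and_mem_iff hab).1 ⟨ha, hb⟩⟩

theorem contractSetoid_le_iff {W : Set E} :
    G.contractSetoid W ≤ s ↔ ∀ e ∈ W, ∀ a ∈ G.inc e, ∀ b ∈ G.inc e, s a b := by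
  simp only [contractSetoid_eq_iSup, iSup₂_le_iff, collapse_le_iff, SetLike.mem_coe]

theorem contractSetoid_apply_of_mem {W : Set E} {e : E} (he : e ∈ W) {a b : V} (ha : a ∈ G.inc e)
    (hb : b ∈ G.inc e) : G.contractSetoid W a b :=
  G.contractSetoid_le_iff.1 le_rfl e he a ha b hb

theorem contractSetoid_union (F W : Set E) :
    G.contractSetoid (F ∪ W) = G.contractSetoid F ⊔ G.contractSetoid W := by
  simp only [contractSetoid_eq_iSup, _root_.iSup_union]

theorem contractSetoid_mono {F W : Set E} (h : F ⊆ W) :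
    G.contractSetoid F ≤ G.contractSetoid W := by
  simp only [contractSetoid_eq_iSup]
  exact biSup_mono h

theorem contractSetoid_empty : G.contractSetoid ∅ = ⊥ := by
  simp only [contractSetoid_eq_iSup, Set.mem_empty_iff_false, iSup_false, iSup_bot]

theorem contractSetoid_singleton {e : E} {x y : V} (h : G.inc e = s(x, y)) :
    G.contractSetoid {e} = collapse {x, y} := by
  simp only [contractSetoid_eq_iSup, Set.mem_singleton_iff, iSup_iSup_eq_left, h, Sym2.coe_mk]

theorem contractSetoid_singleton_le_iff {e : E} {x y : V} (h : G.inc e = s(x, y)) :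
    G.contractSetoid {e} ≤ s ↔ s x y := by
  rw [G.contractSetoid_singleton h, collapse_le_iff]
  have refl := s.refl'
  have symm := @s.symm'
  grind

/-- `T` is the edge set of a spanning tree of the multigraph obtained from `G` by identifying
`s`-related vertices. Edges whose ends are `s`-related count as loops. -/
def IsSpanningTreeMod (s : Setoid V) (T : Set E) : Prop :=
  s ⊔ G.contractSetoid T = ⊤ ∧ T.ncard + 1 = Nat.card (Quotient s)

theorem isSpanningTreeMod_bot {T : Set E} : G.IsSpanningTreeMod ⊥ T ↔ G.IsSpanningTree T := by
  rw [IsSpanningTreeMod, IsSpanningTree, bot_sup_eq, Setoid.eq_top_iff,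
    ← isTransversal_univ_bot.ncard_eq, Set.ncard_univ]
  rfl

section Finite

variable [Finite V]

theorem card_quotient_sup_contractSetoid_singleton {e : E} (he : ¬ G.contractSetoid {e} ≤ s) :
    Nat.card (Quotient s) = 1 + Nat.card (Quotient (s ⊔ G.contractSetoid {e})) := by
  induction h : G.inc e with | _ x y
  rw [G.contractSetoid_singleton_le_iff h] at he
  rw [G.contractSetoid_singleton h, card_quotient_sup_collapse_pair he, add_comm]

variable [Finite E]

theorem card_quotient_le_ncard_add (s : Setoid V) (W : Set E) :
    Nat.card (Quotient s) ≤ W.ncard + Nat.card (Quotient (s ⊔ G.contractSetoid W)) := by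
  induction W, W.toFinite using Set.Finite.induction_on generalizing s with
  | empty => simp [contractSetoid_empty]
  | @insert e W he _ ih =>
    rw [Set.insert_eq, contractSetoid_union, ← sup_assoc, ← Set.insert_eq,
      Set.ncard_insert_of_notMem he]
    have := ih (s ⊔ G.contractSetoid {e})
    by_cases hloop : G.contractSetoid {e} ≤ s
    · rw [sup_eq_left.2 hloop] at this ⊢
      omega
    · have := G.card_quotient_sup_contractSetoid_singleton hloop
      omega

variable {G}

theorem isSpanningTreeMod_union_iff {F W : Set E} (h : Disjoint F W) :
    G.IsSpanningTreeMod s (F ∪ W) ↔ G.IsSpanningTreeMod (s ⊔ G.contractSetoid W) F ∧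
      Nat.card (Quotient s) = W.ncard + Nat.card (Quotient (s ⊔ G.contractSetoid W)) := by
  simp only [IsSpanningTreeMod, contractSetoid_union, Set.ncard_union_eq h, sup_assoc,
    sup_comm (G.contractSetoid W)]
  have hW := G.card_quotient_le_ncard_add s W
  have hF := G.card_quotient_le_ncard_add (s ⊔ G.contractSetoid W) F
  constructor
  · rintro ⟨htop, hcard⟩
    rw [sup_assoc, sup_comm (G.contractSetoid W), htop] at hF
    have : Nat.card (Quotient (⊤ : Setoid V)) ≤ 1 :=
      Finite.card_le_one_iff_subsingleton.2 (Quotient.subsingleton_iff.2 rfl)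
    exact ⟨⟨htop, by omega⟩, by omega⟩
  · rintro ⟨⟨htop, hF⟩, hs⟩
    exact ⟨htop, by omega⟩

theorem isSpanningTreeMod_insert_iff {F : Set E} {e : E} (he : e ∉ F) :
    G.IsSpanningTreeMod s (insert e F) ↔
      ¬ G.contractSetoid {e} ≤ s ∧ G.IsSpanningTreeMod (s ⊔ G.contractSetoid {e}) F := by
  rw [Set.insert_eq, Set.union_comm, isSpanningTreeMod_union_iff (by simpa), and_comm,
    Set.ncard_singleton]
  refine and_congr_left fun _ => ⟨fun hcard hloop => ?_,
    G.card_quotient_sup_contractSetoid_singleton⟩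
  rw [sup_eq_left.2 hloop] at hcard
  omega

theorem IsSpanningTreeMod.not_contractSetoid_le {T : Set E} (h : G.IsSpanningTreeMod s T) {e : E}
    (he : e ∈ T) : ¬ G.contractSetoid {e} ≤ s := by
  rw [← Set.insert_sdiff_self_of_mem he] at h
  exact ((isSpanningTreeMod_insert_iff (by simp)).1 h).1

end Finite

end SpanningTrees

section CliqueCount

variable {V : Type*} {E : Type*} {G : Multigraph V E} {s : Setoid V} {K : Set V}

open Classical in
theorem card_transversals_sup_contractSetoid_singleton [Fintype V] {e : E}
    (he : e ∈ G.edgesWithin K) (hloop : ¬ G.contractSetoid {e} ≤ s) :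
    #(transversals (s ⊔ G.contractSetoid {e}) K) =
      ∑ a with a ∈ G.inc e, #{X ∈ transversals s K | a ∈ X} := by
  induction h : G.inc e with | _ x y
  rw [G.contractSetoid_singleton_le_iff h] at hloop
  have hne : x ≠ y := fun hxy => hloop (hxy ▸ s.refl' x)
  have h_pair : ({a | a ∈ s(x, y)} : Finset V) = {x, y} := by ext; simp
  rw [G.contractSetoid_singleton h, h_pair, sum_pair hne]
  exact card_transversals_sup_collapse_pair hloop (he x (by simp [h])) (he y (by simp [h]))

theorem IsClique.injOn_inc (hK : G.IsClique K) : (G.edgesWithin K).InjOn G.inc := by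
  intro e he f _ hef
  induction h : G.inc e with | _ x y
  have hne : x ≠ y := fun hxy => hK.2 e he (h ▸ hxy)
  exact (hK.1 x (he x (by simp [h])) y (he y (by simp [h])) hne).unique h (hef ▸ h)

variable [Fintype E]

open Classical in
/-- The spanning trees of `G` modulo `s` all of whose edges are within `K`. -/
noncomputable def treesWithin (G : Multigraph V E) (s : Setoid V) (K : Set V) :
    Finset (Set E) :=
  {F | F ⊆ G.edgesWithin K ∧ G.IsSpanningTreeMod s F}

theorem mem_treesWithin {F : Set E} :
    F ∈ G.treesWithin s K ↔ F ⊆ G.edgesWithin K ∧ G.IsSpanningTreeMod s F := by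
  simp [treesWithin]

theorem card_treesWithin_top [Nonempty V] (K : Set V) : #(G.treesWithin ⊤ K) = 1 := by
  have h : G.treesWithin ⊤ K = {∅} := by
    ext F
    rw [mem_treesWithin, IsSpanningTreeMod, card_quotient_eq_one_iff.2 rfl]
    simp only [top_sup_eq, true_and, Nat.add_eq_right, Set.ncard_eq_zero F.toFinite, mem_singleton]
    exact ⟨fun h => h.2, fun h => ⟨h ▸ Set.empty_subset _, h⟩⟩
  rw [h, card_singleton]

open Classical in
theorem IsClique.card_filter_mem_inc [Fintype V] (hK : G.IsClique K) {a : V} (ha : a ∈ K) :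
    #{e | (e ∈ G.edgesWithin K ∧ ¬ G.contractSetoid {e} ≤ s) ∧ a ∈ G.inc e} =
      #{b | b ∈ K ∧ ¬ s a b} := by
  have h_image : image G.inc {e | (e ∈ G.edgesWithin K ∧ ¬ G.contractSetoid {e} ≤ s) ∧ a ∈ G.inc e}
      = image (fun b => s(a, b)) {b | b ∈ K ∧ ¬ s a b} := by
    ext z
    simp only [mem_image, mem_filter, mem_univ, true_and]
    constructor
    · rintro ⟨e, ⟨⟨heK, hloop⟩, hae⟩, rfl⟩
      obtain ⟨b, hb⟩ := Sym2.mem_iff_exists.1 hae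
      exact ⟨b, ⟨heK b (by simp [hb]), (G.contractSetoid_singleton_le_iff hb).not.1 hloop⟩, hb.symm⟩
    · rintro ⟨b, ⟨hbK, hab⟩, rfl⟩
      obtain ⟨e, he, -⟩ := hK.1 a ha b hbK fun h => hab (h ▸ s.refl' a)
      refine ⟨e, ⟨⟨fun v hv => ?_, (G.contractSetoid_singleton_le_iff he).not.2 hab⟩, ?_⟩, he⟩
      · rcases Sym2.mem_iff.1 (he ▸ hv) with rfl | rfl
        exacts [ha, hbK]
      · rw [he]
        exact Sym2.mem_mk_left a b
  rw [← card_image_of_injOn (f := G.inc), h_image,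
    card_image_of_injective _ fun _ _ => Sym2.congr_right.1]
  exact hK.injOn_inc.mono fun e he => (mem_filter.1 he).2.1.1

section Finite

variable [Finite V]

open Classical in
theorem card_treesWithin_filter_mem {e : E} (he : e ∈ G.edgesWithin K)
    (hloop : ¬ G.contractSetoid {e} ≤ s) :
    #{F ∈ G.treesWithin s K | e ∈ F} = #(G.treesWithin (s ⊔ G.contractSetoid {e}) K) := by
  have e_notMem : ∀ F ∈ G.treesWithin (s ⊔ G.contractSetoid {e}) K, e ∉ F := fun F hF heF =>
    (mem_treesWithin.1 hF).2.not_contractSetoid_le heF le_sup_right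
  refine card_nbij' (· \ {e}) (insert e) (fun F hF => ?_) (fun F hF => ?_) (fun F hF => ?_)
    (fun F hF => ?_)
  · obtain ⟨hF, heF⟩ := mem_filter.1 hF
    rw [mem_treesWithin, ← Set.insert_sdiff_self_of_mem heF,
      isSpanningTreeMod_insert_iff (by simp)] at hF
    exact mem_treesWithin.2 ⟨(Set.subset_insert _ _).trans hF.1, hF.2.2⟩
  · have := mem_treesWithin.1 hF
    refine mem_filter.2 ⟨mem_treesWithin.2 ⟨Set.insert_subset he this.1, ?_⟩, Set.mem_insert e F⟩
    exact (isSpanningTreeMod_insert_iff (e_notMem F hF)).2 ⟨hloop, this.2⟩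
  · exact Set.insert_sdiff_self_of_mem (mem_filter.1 hF).2
  · exact Set.insert_sdiff_self_of_notMem (e_notMem F hF)

open Classical in
theorem mul_card_treesWithin {m : ℕ} (hm : Nat.card (Quotient s) = m + 1) :
    m * #(G.treesWithin s K) = ∑ e with e ∈ G.edgesWithin K ∧ ¬ G.contractSetoid {e} ≤ s,
      #(G.treesWithin (s ⊔ G.contractSetoid {e}) K) := by
  calc m * #(G.treesWithin s K)
      = ∑ F ∈ G.treesWithin s K,
          #{e ∈ {e | e ∈ G.edgesWithin K ∧ ¬ G.contractSetoid {e} ≤ s} | e ∈ F} := by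
        rw [mul_comm, ← smul_eq_mul, ← sum_const]
        refine sum_congr rfl fun F hF => ?_
        obtain ⟨hFK, hF⟩ := mem_treesWithin.1 hF
        have hF_eq : ({e ∈ {e | e ∈ G.edgesWithin K ∧ ¬ G.contractSetoid {e} ≤ s} | e ∈ F} :
            Finset E) = F.toFinset := by
          ext e
          simp only [mem_filter, mem_univ, true_and, Set.mem_toFinset, and_iff_right_iff_imp]
          exact fun he => ⟨hFK he, hF.not_contractSetoid_le he⟩
        rw [hF_eq, ← Set.ncard_eq_toFinset_card']
        exact Nat.succ_injective (hm.symm.trans hF.2.symm)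
    _ = ∑ e with e ∈ G.edgesWithin K ∧ ¬ G.contractSetoid {e} ≤ s,
          #{F ∈ G.treesWithin s K | e ∈ F} :=
        sum_card_bipartiteAbove_eq_sum_card_bipartiteBelow fun F e => e ∈ F
    _ = _ := by
        refine sum_congr rfl fun e he => ?_
        obtain ⟨heK, hloop⟩ := (mem_filter.1 he).2
        exact card_treesWithin_filter_mem heK hloop

end Finite

/-- Cayley's formula for a clique with identified vertices: `#(transversals s K)` is the product of
the sizes of the classes, and the factor `K.ncard ^ 2` avoids a negative exponent. -/
theorem IsClique.card_treesWithin_mul [Fintype V] (hK : G.IsClique K) {m : ℕ}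
    (hm : Nat.card (Quotient s) = m + 1) :
    #(G.treesWithin s K) * K.ncard ^ 2 = K.ncard ^ (m + 1) * #(transversals s K) := by
  classical
  induction m generalizing s with
  | zero =>
    have hpos : 0 < Nat.card (Quotient s) := by omega
    have : Nonempty V := (Nat.card_pos_iff.1 hpos).1.map Quotient.out
    obtain rfl := card_quotient_eq_one_iff.1 hm
    rw [card_treesWithin_top, card_transversals_top]
    ring
  | succ m ih =>
    refine Nat.eq_of_mul_eq_mul_left m.succ_pos ?_
    let edges : Finset E := {e | e ∈ G.edgesWithin K ∧ ¬ G.contractSetoid {e} ≤ s}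
    calc (m + 1) * (#(G.treesWithin s K) * K.ncard ^ 2)
        = ∑ e ∈ edges, #(G.treesWithin (s ⊔ G.contractSetoid {e}) K) * K.ncard ^ 2 := by
          rw [← mul_assoc, mul_card_treesWithin hm, sum_mul]
      _ = ∑ e ∈ edges, K.ncard ^ (m + 1) *
            ∑ a with a ∈ G.inc e, #{X ∈ transversals s K | a ∈ X} := by
          refine sum_congr rfl fun e he => ?_
          obtain ⟨heK, hloop⟩ := (mem_filter.1 he).2
          have := G.card_quotient_sup_contractSetoid_singleton hloop
          rw [ih (by omega), card_transversals_sup_contractSetoid_singleton heK hloop]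
      _ = K.ncard ^ (m + 1) * ∑ a with a ∈ K, ∑ e ∈ edges with a ∈ G.inc e,
            #{X ∈ transversals s K | a ∈ X} := by
          rw [← mul_sum]
          congr 1
          refine sum_comm' fun e a => ?_
          simp only [edges, mem_filter, mem_univ, true_and]
          exact ⟨fun h => ⟨⟨h.1, h.2⟩, h.1.1 a h.2⟩, fun h => h.1⟩
      _ = K.ncard ^ (m + 1) *
            ∑ a with a ∈ K, #{X ∈ transversals s K | a ∈ X} * #{b | b ∈ K ∧ ¬ s a b} := by
          congr 1
          refine sum_congr rfl fun a ha => ?_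
          rw [sum_const, smul_eq_mul, mul_comm, filter_filter,
            hK.card_filter_mem_inc (mem_filter.1 ha).2]
      _ = (m + 1) * (K.ncard ^ (m + 1 + 1) * #(transversals s K)) := by
          rw [sum_card_transversals_filter_mem_mul hm]
          ring

end CliqueCount

section Detachment

variable {V : Type*} {E : Type*} {G : Multigraph V E} {s : Setoid V} {K : Set V} {W D : Set E}

theorem mem_edgeBoundary_of_notMem_edgesWithin {e : E} {a : V} (he : e ∉ G.edgesWithin K)
    (hae : a ∈ G.inc e) (ha : a ∈ K) : e ∈ G.edgeBoundary K := by
  obtain ⟨b, hb⟩ := Sym2.mem_iff_exists.1 hae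
  refine ⟨a, b, hb, ha, fun hbK => he fun v hv => ?_⟩
  rcases Sym2.mem_iff.1 (hb ▸ hv) with rfl | rfl
  exacts [ha, hbK]

theorem eq_of_mem_inc_of_mem_edgeBoundary {e : E} (he : e ∈ G.edgeBoundary K) {a b : V}
    (hae : a ∈ G.inc e) (ha : a ∈ K) (hbe : b ∈ G.inc e) (hb : b ∈ K) : a = b := by
  obtain ⟨x, y, hxy, -, hy⟩ := he
  rw [hxy, Sym2.mem_iff] at hae hbe
  grind

/-- Every vertex of `K` is an end of at most one edge leaving `K`. -/
def SimplyAttached (G : Multigraph V E) (K : Set V) : Prop :=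
  ∀ a ∈ K, {e ∈ G.edgeBoundary K | a ∈ G.inc e}.Subsingleton

theorem SimplyAttached.notMem_supp (hK : G.SimplyAttached K) (hW : Disjoint W (G.edgesWithin K))
    (hD : D ⊆ G.edgeBoundary K) {e : E} (he : e ∈ W \ D) {a : V} (hae : a ∈ G.inc e) (ha : a ∈ K) :
    a ∉ G.supp D := by
  rintro ⟨d, hd, had⟩
  have he_bdry := mem_edgeBoundary_of_notMem_edgesWithin (hW.notMem_of_mem_left he.1) hae ha
  exact he.2 (hK a ha ⟨he_bdry, hae⟩ ⟨hD hd, had⟩ ▸ hd)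

theorem SimplyAttached.ncard_inter_supp (hK : G.SimplyAttached K) (hD : D ⊆ G.edgeBoundary K) :
    (K ∩ G.supp D).ncard = D.ncard := by
  have exists_end : ∀ e ∈ D, ∃ a ∈ K, a ∈ G.inc e := fun e he => by
    obtain ⟨a, b, hab, ha, -⟩ := hD he
    exact ⟨a, ha, hab ▸ Sym2.mem_mk_left a b⟩
  choose f hfK hf_inc using exists_end
  symm
  refine Set.ncard_congr f (fun e he => ⟨hfK e he, e, he, hf_inc e he⟩) ?_ ?_
  · intro e d he hd hed
    exact hK (f e he) (hfK e he) ⟨hD he, hf_inc e he⟩ ⟨hD hd, hed ▸ hf_inc d hd⟩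
  · rintro a ⟨ha, e, he, hae⟩
    exact ⟨e, he, eq_of_mem_inc_of_mem_edgeBoundary (hD he) (hf_inc e he) (hfK e he) hae ha⟩

theorem SimplyAttached.ncard_sdiff_supp_add_ncard [Finite V] (hK : G.SimplyAttached K)
    (hD : D ⊆ G.edgeBoundary K) : (K \ G.supp D).ncard + D.ncard = K.ncard := by
  rw [← hK.ncard_inter_supp hD, add_comm, Set.ncard_inter_add_ncard_sdiff_eq_ncard]

theorem SimplyAttached.sup_contractSetoid_sdiff_le (hK : G.SimplyAttached K)
    (hs : s ≤ collapse Kᶜ) (hW : Disjoint W (G.edgesWithin K)) (hD : D ⊆ G.edgeBoundary K) :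
    s ⊔ G.contractSetoid (W \ D) ≤ collapse (K ∩ G.supp D)ᶜ := by
  refine sup_le (hs.trans (collapse_mono (Set.compl_subset_compl.2 Set.inter_subset_left)))
    (G.contractSetoid_le_iff.2 fun e he a ha b hb => .inr ⟨?_, ?_⟩)
  · exact fun h => hK.notMem_supp hW hD he ha h.1 h.2
  · exact fun h => hK.notMem_supp hW hD he hb h.1 h.2

/-- The retraction moves each vertex of `K ∩ G.supp D` along its unique edge of `D`. -/
theorem SimplyAttached.exists_retraction (hK : G.SimplyAttached K) (hD : D ⊆ G.edgeBoundary K) :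
    ∃ retract : V → V, (∀ v ∉ K ∩ G.supp D, retract v = v) ∧
      ∀ d ∈ D, ∀ x ∈ G.inc d, ∀ y ∈ G.inc d, retract x = retract y := by
  have exists_other : ∀ v, ∃ b, (v ∉ K ∩ G.supp D → b = v) ∧
      ∀ d ∈ D, ∀ c, v ∈ K → G.inc d = s(v, c) → b = c := by
    intro v
    by_cases hv : v ∈ K ∩ G.supp D
    · obtain ⟨hvK, d, hd, hvd⟩ := hv
      obtain ⟨b, hb⟩ := Sym2.mem_iff_exists.1 hvd
      refine ⟨b, fun h => absurd ⟨hvK, d, hd, hvd⟩ h, fun d' hd' c _ hc => ?_⟩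
      obtain rfl := hK v hvK ⟨hD hd, hvd⟩ ⟨hD hd', hc ▸ Sym2.mem_mk_left v c⟩
      exact Sym2.congr_right.1 (hb.symm.trans hc)
    · exact ⟨v, fun _ => rfl, fun d hd c hvK hc =>
        absurd ⟨hvK, d, hd, hc ▸ Sym2.mem_mk_left v c⟩ hv⟩
  choose retract retract_of_notMem retract_eq using exists_other
  refine ⟨retract, retract_of_notMem, fun d hd => ?_⟩
  obtain ⟨a, b, hab, ha, hb⟩ := hD hd
  have ha_eq : retract a = b := retract_eq a d hd b ha hab
  have hb_eq : retract b = b := retract_of_notMem b fun h => hb h.1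
  simp only [hab, Sym2.mem_iff]
  grind

theorem SimplyAttached.sup_contractSetoid_sdiff_apply (hK : G.SimplyAttached K)
    (hs : s ≤ collapse Kᶜ) (hW : Disjoint W (G.edgesWithin K)) (hD : D ⊆ G.edgeBoundary K)
    {u v : V} (hu : u ∉ K ∩ G.supp D) (hv : v ∉ K ∩ G.supp D)
    (huv : (s ⊔ G.contractSetoid W) u v) : (s ⊔ G.contractSetoid (W \ D)) u v := by
  obtain ⟨retract, retract_of_notMem, retract_eq⟩ := hK.exists_retraction hD
  have h_le : s ⊔ G.contractSetoid W ≤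
      Setoid.comap retract (s ⊔ G.contractSetoid (W \ D)) := by
    refine sup_le (fun x y hxy => ?_) (G.contractSetoid_le_iff.2 fun e he x hx y hy => ?_)
    · rcases hs hxy with rfl | ⟨hx, hy⟩
      · exact Setoid.refl' _ _
      · rw [Setoid.comap_rel, retract_of_notMem x fun h => hx h.1,
          retract_of_notMem y fun h => hy h.1]
        exact (le_sup_left : s ≤ _) hxy
    · rw [Setoid.comap_rel]
      by_cases heD : e ∈ D
      · rw [retract_eq e heD x hx y hy]
      · have heWD : e ∈ W \ D := ⟨he, heD⟩
        have h_fix : ∀ z ∈ G.inc e, retract z = z := fun z hz =>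
          retract_of_notMem z fun h => hK.notMem_supp hW hD heWD hz h.1 h.2
        rw [h_fix x hx, h_fix y hy]
        exact (le_sup_right : G.contractSetoid (W \ D) ≤ _)
          (G.contractSetoid_apply_of_mem heWD hx hy)
  have := h_le huv
  rwa [Setoid.comap_rel, retract_of_notMem u hu, retract_of_notMem v hv] at this

variable [Finite V] [Finite E]

theorem SimplyAttached.isSpanningTreeMod_sup_collapse_iff (hK : G.SimplyAttached K)
    (hne : K.Nonempty) (hs : s ≤ collapse Kᶜ) (hW : Disjoint W (G.edgesWithin K))
    (hDW : D ⊆ W) (hD : D ⊆ G.edgeBoundary K) :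
    G.IsSpanningTreeMod (s ⊔ collapse K) (W \ D) ↔
      IsTransversal (s ⊔ G.contractSetoid W) (K \ G.supp D) ∧
      Nat.card (Quotient s) = W.ncard + Nat.card (Quotient (s ⊔ G.contractSetoid W)) := by
  have card_K := card_quotient_sup_collapse (injOn_mk_of_le_collapse_compl hs) hne
  have card_D := hK.ncard_sdiff_supp_add_ncard hD
  have card_WD := Set.ncard_sdiff_add_ncard_of_subset hDW
  have card_W := G.card_quotient_le_ncard_add s W
  have le_W : s ⊔ G.contractSetoid (W \ D) ≤ s ⊔ G.contractSetoid W :=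
    sup_le_sup_left (G.contractSetoid_mono Set.sdiff_subset) s
  rw [IsSpanningTreeMod, sup_right_comm, sup_collapse_eq_top_iff hne]
  constructor
  · rintro ⟨htop, hcard⟩
    have reach_outside : ∀ v ∉ K ∩ G.supp D,
        ∃ a ∈ K \ G.supp D, (s ⊔ G.contractSetoid W) v a := by
      intro v hv
      obtain ⟨a, ha, hva⟩ := htop v
      rcases hK.sup_contractSetoid_sdiff_le hs hW hD hva with rfl | ⟨-, haD⟩
      · exact ⟨v, ⟨ha, fun h => hv ⟨ha, h⟩⟩, Setoid.refl' _ v⟩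
      · exact ⟨a, ⟨ha, fun h => haD ⟨ha, h⟩⟩, le_W hva⟩
    have reach : ∀ v, ∃ a ∈ K \ G.supp D, (s ⊔ G.contractSetoid W) v a := by
      intro v
      by_cases hv : v ∈ K ∩ G.supp D
      · obtain ⟨-, d, hd, hvd⟩ := hv
        obtain ⟨x, y, hxy, -, hy⟩ := hD hd
        obtain ⟨a, ha, hya⟩ := reach_outside y fun h => hy h.1
        refine ⟨a, ha, Setoid.trans' _ ?_ hya⟩
        exact (le_sup_right : G.contractSetoid W ≤ _)
          (G.contractSetoid_apply_of_mem (hDW hd) hvd (hxy ▸ Sym2.mem_mk_right x y))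
      · exact reach_outside v hv
    have := card_quotient_le_ncard reach
    exact ⟨isTransversal_of_ncard_le reach (by omega), by omega⟩
  · rintro ⟨htrans, hcard⟩
    have := htrans.ncard_eq
    refine ⟨fun v => ?_, by omega⟩
    by_cases hv : v ∈ K ∩ G.supp D
    · exact ⟨v, hv.1, Setoid.refl' _ v⟩
    · obtain ⟨a, ⟨haK, haD⟩, hva⟩ := (htrans v).exists
      exact ⟨a, haK, hK.sup_contractSetoid_sdiff_apply hs hW hD hv (fun h => haD h.2) hva⟩

end Detachment

section DetachmentCount

variable {V : Type*} {E : Type*} {G : Multigraph V E} {s : Setoid V} {K : Set V} {W : Set E}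

theorem exists_mem_edgeBoundary_of_isTransversal (hs : s ≤ collapse Kᶜ)
    (hW : Disjoint W (G.edgesWithin K)) {X : Set V} (hX : IsTransversal (s ⊔ G.contractSetoid W) X)
    {a : V} (ha : a ∈ K) (haX : a ∉ X) : ∃ e ∈ W ∩ G.edgeBoundary K, a ∈ G.inc e := by
  by_contra! h
  have h_le : s ⊔ G.contractSetoid W ≤ collapse {a}ᶜ := by
    refine sup_le (hs.trans (collapse_mono (by simpa)))
      (G.contractSetoid_le_iff.2 fun e he x hx y hy => ?_)
    have hae : a ∉ G.inc e := fun hae => h e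
      ⟨he, mem_edgeBoundary_of_notMem_edgesWithin (hW.notMem_of_mem_left he) hae ha⟩ hae
    exact .inr ⟨fun h => hae (h ▸ hx), fun h => hae (h ▸ hy)⟩
  obtain ⟨b, ⟨hb, hab⟩, -⟩ := hX a
  rcases h_le hab with rfl | ⟨h, -⟩
  exacts [haX hb, h rfl]

variable [Fintype E]

open Classical in
theorem SimplyAttached.card_filter_isTransversal [Fintype V] (hK : G.SimplyAttached K)
    (hs : s ≤ collapse Kᶜ) (hW : Disjoint W (G.edgesWithin K)) :
    #{D | D ⊆ W ∩ G.edgeBoundary K ∧ IsTransversal (s ⊔ G.contractSetoid W) (K \ G.supp D)} =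
      #(transversals (s ⊔ G.contractSetoid W) K) := by
  have K_sdiff_supp : ∀ X ∈ transversals (s ⊔ G.contractSetoid W) K,
      K \ G.supp {e ∈ W ∩ G.edgeBoundary K | ∃ a ∈ G.inc e, a ∈ K \ X} = X := by
    intro X hX
    obtain ⟨hXK, hX⟩ := mem_transversals.1 hX
    ext a
    refine ⟨fun ⟨haK, ha⟩ => ?_, fun ha => ⟨hXK ha, ?_⟩⟩
    · by_contra haX
      obtain ⟨e, he, hae⟩ := exists_mem_edgeBoundary_of_isTransversal hs hW hX haK haX
      exact ha ⟨e, ⟨he, a, hae, haK, haX⟩, hae⟩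
    · rintro ⟨e, ⟨he, b, hbe, hbK, hbX⟩, hae⟩
      exact hbX (eq_of_mem_inc_of_mem_edgeBoundary he.2 hae (hXK ha) hbe hbK ▸ ha)
  refine card_nbij' (K \ G.supp ·)
    (fun X => {e ∈ W ∩ G.edgeBoundary K | ∃ a ∈ G.inc e, a ∈ K \ X}) ?_ ?_ ?_ ?_
  · exact fun D hD => mem_transversals.2 ⟨Set.sdiff_subset, (mem_filter.1 hD).2.2⟩
  · refine fun X hX => mem_filter.2 ⟨mem_univ _, Set.sep_subset _ _, ?_⟩
    rw [K_sdiff_supp X hX]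
    exact (mem_transversals.1 hX).2
  · intro D hD
    have hDW := (mem_filter.1 hD).2.1
    ext e
    refine ⟨fun ⟨he, a, hae, haK, ha⟩ => ?_, fun he => ⟨hDW he, ?_⟩⟩
    · obtain ⟨d, hd, had⟩ : a ∈ G.supp D := by_contra fun h => ha ⟨haK, h⟩
      exact hK a haK ⟨he.2, hae⟩ ⟨(hDW hd).2, had⟩ ▸ hd
    · obtain ⟨a, b, hab, haK, -⟩ := (hDW he).2
      have hae : a ∈ G.inc e := hab ▸ Sym2.mem_mk_left a b
      exact ⟨a, hae, haK, fun h => h.2 ⟨e, he, hae⟩⟩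
  · exact K_sdiff_supp

variable [Finite V]

open Classical in
theorem IsClique.card_treesWithin_eq_sum (hK : G.IsClique K) (hne : K.Nonempty)
    (hatt : G.SimplyAttached K) (hs : s ≤ collapse Kᶜ) (hW : Disjoint W (G.edgesWithin K)) :
    (#(G.treesWithin (s ⊔ G.contractSetoid W) K) : ℚ) =
      (K.ncard : ℚ) ^ ((K.ncard : ℤ) - 2) *
        ∑ D with D ⊆ W ∩ G.edgeBoundary K ∧
            IsTransversal (s ⊔ G.contractSetoid W) (K \ G.supp D),
          (K.ncard : ℚ) ^ (-(D.ncard : ℤ)) := by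
  cases nonempty_fintype V
  have hn : (K.ncard : ℚ) ≠ 0 := by exact_mod_cast hne.ncard_pos.ne'
  obtain ⟨m, hm⟩ : ∃ m, Nat.card (Quotient (s ⊔ G.contractSetoid W)) = m + 1 :=
    have : Nonempty (Quotient (s ⊔ G.contractSetoid W)) := ⟨Quotient.mk _ hne.some⟩
    Nat.exists_eq_add_one.2 Finite.card_pos
  have count : (#(G.treesWithin (s ⊔ G.contractSetoid W) K) : ℚ) * K.ncard ^ 2 =
      K.ncard ^ (m + 1) * #(transversals (s ⊔ G.contractSetoid W) K) := by
    exact_mod_cast hK.card_treesWithin_mul hm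
  have ncard_D : ∀ D ∈ ({D | D ⊆ W ∩ G.edgeBoundary K ∧
      IsTransversal (s ⊔ G.contractSetoid W) (K \ G.supp D)} : Finset (Set E)),
      (K.ncard : ℚ) ^ (-(D.ncard : ℤ)) = (K.ncard : ℚ) ^ ((m + 1 : ℤ) - K.ncard) := by
    intro D hD
    obtain ⟨hDW, htrans⟩ := (mem_filter.1 hD).2
    have := hatt.ncard_sdiff_supp_add_ncard (hDW.trans Set.inter_subset_right)
    rw [htrans.ncard_eq] at this
    congr 1
    omega
  rw [sum_congr rfl ncard_D, sum_const, hatt.card_filter_isTransversal hs hW, nsmul_eq_mul,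
    mul_left_comm, ← zpow_add₀ hn, ← mul_left_inj' (pow_ne_zero 2 hn), count, mul_comm, mul_assoc,
    ← zpow_natCast, ← zpow_natCast, ← zpow_add₀ hn]
  congr 2
  push_cast
  ring

open Classical in
theorem IsClique.card_filter_isSpanningTreeMod_union (hK : G.IsClique K) (hne : K.Nonempty)
    (hatt : G.SimplyAttached K) (hs : s ≤ collapse Kᶜ) (hW : Disjoint W (G.edgesWithin K)) :
    (#{F | F ⊆ G.edgesWithin K ∧ G.IsSpanningTreeMod s (F ∪ W)} : ℚ) =
      (K.ncard : ℚ) ^ ((K.ncard : ℤ) - 2) *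
        ∑ D with D ⊆ W ∩ G.edgeBoundary K ∧ G.IsSpanningTreeMod (s ⊔ collapse K) (W \ D),
          (K.ncard : ℚ) ^ (-(D.ncard : ℤ)) := by
  have tree_F_iff : ∀ F, F ⊆ G.edgesWithin K ∧ G.IsSpanningTreeMod s (F ∪ W) ↔
      F ⊆ G.edgesWithin K ∧ G.IsSpanningTreeMod (s ⊔ G.contractSetoid W) F ∧
        Nat.card (Quotient s) = W.ncard + Nat.card (Quotient (s ⊔ G.contractSetoid W)) :=
    fun F => and_congr_right fun hF => isSpanningTreeMod_union_iff (hW.symm.mono_left hF)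
  have tree_D_iff : ∀ D,
      D ⊆ W ∩ G.edgeBoundary K ∧ G.IsSpanningTreeMod (s ⊔ collapse K) (W \ D) ↔
      D ⊆ W ∩ G.edgeBoundary K ∧ IsTransversal (s ⊔ G.contractSetoid W) (K \ G.supp D) ∧
        Nat.card (Quotient s) = W.ncard + Nat.card (Quotient (s ⊔ G.contractSetoid W)) :=
    fun D => and_congr_right fun hD => hatt.isSpanningTreeMod_sup_collapse_iff hne hs hW
      (hD.trans Set.inter_subset_left) (hD.trans Set.inter_subset_right)
  simp only [tree_F_iff, tree_D_iff]
  by_cases hcard : Nat.card (Quotient s) =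
      W.ncard + Nat.card (Quotient (s ⊔ G.contractSetoid W))
  · simp only [hcard, and_true]
    exact hK.card_treesWithin_eq_sum hne hatt hs hW
  · simp only [hcard, and_false, filter_false, card_empty, sum_empty, mul_zero, Nat.cast_zero]

end DetachmentCount

end Multigraph

section SubsetSums

variable {E : Type*} [Fintype E]

open Classical in
theorem sum_zpow_neg_ncard {F : Type*} [Field F] {A B : Set E} (hBA : B ⊆ A) {c : F} (hc : c ≠ 0) :
    ∑ D : Set E with B ⊆ D ∧ D ⊆ A, c ^ (-(D.ncard : ℤ)) =
      c ^ (-(A.ncard : ℤ)) * (1 + c) ^ (A \ B).ncard := by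
  have term_eq : ∀ D ∈ ({D | B ⊆ D ∧ D ⊆ A} : Finset (Set E)),
      c ^ (-(D.ncard : ℤ)) = c ^ (-(A.ncard : ℤ)) * c ^ #(A \ D).toFinset := by
    intro D hD
    rw [← zpow_natCast, ← zpow_add₀ hc, ← Set.ncard_eq_toFinset_card',
      ← Set.ncard_sdiff_add_ncard_of_subset (mem_filter.1 hD).2.2]
    congr 1
    push_cast
    ring
  have reindex : ∑ D : Set E with B ⊆ D ∧ D ⊆ A, c ^ #(A \ D).toFinset =
      ∑ Z ∈ (A \ B).toFinset.powerset, c ^ #Z := by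
    refine sum_nbij' (fun D => (A \ D).toFinset) (fun Z => A \ Z) ?_ ?_ ?_ ?_ fun _ _ => rfl
    · intro D hD
      obtain ⟨hBD, -⟩ := (mem_filter.1 hD).2
      simpa using Set.sdiff_subset_sdiff_right hBD
    · intro Z hZ
      rw [mem_powerset, Set.subset_toFinset] at hZ
      simp only [mem_filter, mem_univ, true_and]
      grind
    · intro D hD
      simp [Set.inter_eq_right.2 (mem_filter.1 hD).2.2]
    · intro Z hZ
      rw [mem_powerset, Set.subset_toFinset] at hZ
      simp [Set.inter_eq_right.2 (hZ.trans Set.sdiff_subset)]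
  rw [sum_congr rfl term_eq, ← mul_sum, reindex, Set.ncard_eq_toFinset_card' (A \ B),
    add_comm 1 c, ← sum_pow_mul_eq_add_pow]
  simp only [one_pow, mul_one]

variable {S : Type*} [CommSemiring S] {p : Set E → Prop}

open Classical in
theorem sum_filter_eq_sum_card_union_mul {P Y : Set E} (hP : Disjoint P Y) {f : Set E → S}
    (hf : ∀ F ⊆ Y, ∀ W, f (F ∪ W) = f W) :
    ∑ T with p T ∧ P ⊆ T, f T =
      ∑ W with Disjoint W Y ∧ P ⊆ W, #{F | F ⊆ Y ∧ p (F ∪ W)} * f W := by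
  have maps : ∀ T ∈ ({T | p T ∧ P ⊆ T} : Finset (Set E)),
      T \ Y ∈ ({W | Disjoint W Y ∧ P ⊆ W} : Finset (Set E)) := fun T hT =>
    mem_filter.2 ⟨mem_univ _, Set.disjoint_sdiff_left,
      Set.subset_sdiff.2 ⟨(mem_filter.1 hT).2.2, hP⟩⟩
  rw [← sum_fiberwise_of_maps_to maps]
  refine sum_congr rfl fun W hW => ?_
  obtain ⟨hWY, hPW⟩ := (mem_filter.1 hW).2
  rw [← nsmul_eq_mul, ← sum_const]
  have inter_union : ∀ T, T \ Y = W → T ∩ Y ∪ W = T := fun T hT =>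
    hT ▸ Set.inter_union_sdiff T Y
  have union_inter : ∀ F ⊆ Y, (F ∪ W) ∩ Y = F := fun F hF => by
    rw [Set.union_inter_distrib_right, hWY.inter_eq, Set.union_empty, Set.inter_eq_left.2 hF]
  have union_sdiff : ∀ F ⊆ Y, (F ∪ W) \ Y = W := fun F hF => by
    rw [Set.union_sdiff_distrib, Set.sdiff_eq_empty.2 hF, Set.empty_union, hWY.sdiff_eq_left]
  refine sum_nbij' (· ∩ Y) (· ∪ W) ?_ ?_ ?_ ?_ ?_ <;>
    simp only [mem_filter, mem_univ, true_and, and_imp]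
  · exact fun T hT _ hTW => ⟨Set.inter_subset_right, (inter_union T hTW).symm ▸ hT⟩
  · exact fun F hF hT => ⟨⟨hT, hPW.trans Set.subset_union_right⟩, union_sdiff F hF⟩
  · exact fun T _ _ hTW => inter_union T hTW
  · exact fun F hF _ => union_inter F hF
  · exact fun T _ _ hTW => inter_union T hTW ▸ hf _ Set.inter_subset_right W

open Classical in
theorem sum_sum_filter_sdiff_mul {A P Y : Set E} (hAY : Disjoint A Y)
    (hp : ∀ T, p T → Disjoint T Y) {f c : Set E → S}
    (hf : ∀ D ⊆ A, ∀ W, f (D ∪ W) = f W) :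
    ∑ W with Disjoint W Y ∧ P ⊆ W,
        (∑ D with D ⊆ W ∩ A ∧ p (W \ D), c D) * f W =
      ∑ T with p T ∧ P \ A ⊆ T,
        f T * ∑ D with (A ∩ P) \ T ⊆ D ∧ D ⊆ A \ T, c D := by
  simp only [sum_mul, mul_sum, sum_sigma']
  refine sum_nbij' (fun x => ⟨x.1 \ x.2, x.2⟩) (fun x => ⟨x.2 ∪ x.1, x.2⟩) ?_ ?_ ?_ ?_ ?_
  all_goals
    rintro ⟨X, D⟩
    simp only [mem_sigma, mem_filter, mem_univ, true_and, and_imp]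
  · intro _ hPX hD hT
    grind
  · intro hT hPX hPD hD
    have hXY := hp X hT
    have hDX : (D ∪ X) \ D = X := Set.union_sdiff_cancel_left (by grind)
    rw [hDX]
    grind
  · intro _ _ hD _
    rw [Set.union_sdiff_cancel (hD.trans Set.inter_subset_left)]
  · intro _ _ _ hD
    rw [Set.union_sdiff_cancel_left (by grind)]
  · intro _ _ hD _
    rw [mul_comm, ← hf D (hD.trans Set.inter_subset_right) (X \ D),
      Set.union_sdiff_cancel (hD.trans Set.inter_subset_left)]

end SubsetSums

namespace Multigraph

section CliqueContraction

variable {V : Type*} {E : Type*} {G : Multigraph V E} {s : Setoid V} {K : Set V}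

theorem disjoint_edgeBoundary_edgesWithin (G : Multigraph V E) (K : Set V) :
    Disjoint (G.edgeBoundary K) (G.edgesWithin K) :=
  Set.disjoint_left.2 fun _ ⟨_, _, hinc, _, hv⟩ he => hv (he _ (hinc ▸ Sym2.mem_mk_right _ _))

theorem IsSpanningTreeMod.disjoint_edgesWithin [Finite V] [Finite E] {T : Set E}
    (hT : G.IsSpanningTreeMod s T) (hK : collapse K ≤ s) : Disjoint T (G.edgesWithin K) := by
  refine Set.disjoint_left.2 fun e heT he => hT.not_contractSetoid_le heT ?_
  refine G.contractSetoid_le_iff.2 fun d hd a ha b hb => ?_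
  obtain rfl := hd
  exact collapse_le_iff.1 hK a (he a ha) b (he b hb)

variable [Fintype E] [Finite V]

open Classical in
theorem IsClique.sum_isSpanningTreeMod (hK : G.IsClique K) (hne : K.Nonempty)
    (hatt : G.SimplyAttached K) (hs : s ≤ collapse Kᶜ) {P : Set E}
    (hP : Disjoint P (G.edgesWithin K)) {f : Set E → ℚ}
    (hf : ∀ F ⊆ G.edgesWithin K ∪ G.edgeBoundary K, ∀ W, f (F ∪ W) = f W) :
    ∑ T with G.IsSpanningTreeMod s T ∧ P ⊆ T, f T =
      (K.ncard : ℚ) ^ ((K.ncard : ℤ) - 2) *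
        ∑ T with G.IsSpanningTreeMod (s ⊔ collapse K) T ∧ P \ G.edgeBoundary K ⊆ T,
          f T * ((K.ncard : ℚ) ^ (-((G.edgeBoundary K \ T).ncard : ℤ)) *
            (1 + (K.ncard : ℚ)) ^ ((G.edgeBoundary K \ P) \ T).ncard) := by
  have hn : (K.ncard : ℚ) ≠ 0 := by exact_mod_cast hne.ncard_pos.ne'
  have hKK := G.disjoint_edgeBoundary_edgesWithin K
  rw [sum_filter_eq_sum_card_union_mul hP fun F hF W =>
    hf F (hF.trans Set.subset_union_left) W]
  calc _ = ∑ W with Disjoint W (G.edgesWithin K) ∧ P ⊆ W,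
        (K.ncard : ℚ) ^ ((K.ncard : ℤ) - 2) *
        ((∑ D with D ⊆ W ∩ G.edgeBoundary K ∧ G.IsSpanningTreeMod (s ⊔ collapse K) (W \ D),
          (K.ncard : ℚ) ^ (-(D.ncard : ℤ))) * f W) := by
        refine sum_congr rfl fun W hW => ?_
        rw [hK.card_filter_isSpanningTreeMod_union hne hatt hs (mem_filter.1 hW).2.1, mul_assoc]
    _ = (K.ncard : ℚ) ^ ((K.ncard : ℤ) - 2) *
        ∑ T with G.IsSpanningTreeMod (s ⊔ collapse K) T ∧ P \ G.edgeBoundary K ⊆ T,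
          f T * ∑ D : Set E with (G.edgeBoundary K ∩ P) \ T ⊆ D ∧ D ⊆ G.edgeBoundary K \ T,
            (K.ncard : ℚ) ^ (-(D.ncard : ℤ)) := by
        rw [← mul_sum, sum_sum_filter_sdiff_mul hKK
          (fun T hT => hT.disjoint_edgesWithin le_sup_right)
          fun D hD W => hf D (hD.trans Set.subset_union_right) W]
    _ = _ := by
        congr 1
        refine sum_congr rfl fun T _ => ?_
        have sdiff_sdiff : (G.edgeBoundary K \ T) \ ((G.edgeBoundary K ∩ P) \ T) =
            (G.edgeBoundary K \ P) \ T := by grind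
        rw [sum_zpow_neg_ncard (Set.sdiff_subset_sdiff_left Set.inter_subset_left) hn, sdiff_sdiff]

end CliqueContraction

section CliqueFamilies

variable {V : Type*} {E : Type*} {G : Multigraph V E}

theorem disjoint_edgeBoundary_of_edgesBetween_eq_empty {K L : Set V} (hKL : Disjoint K L)
    (hbetween : G.edgesBetween K L = ∅) :
    Disjoint (G.edgeBoundary K) (G.edgesWithin L ∪ G.edgeBoundary L) := by
  refine Set.disjoint_left.2 ?_
  rintro e ⟨a, b, hab, ha, -⟩ (he | ⟨x, y, hxy, hx, -⟩)
  · exact Set.disjoint_left.1 hKL ha (he a (hab ▸ Sym2.mem_mk_left a b))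
  · have hxb : x = b := by
      rcases Sym2.mem_iff.1 (hab ▸ hxy ▸ Sym2.mem_mk_left x y) with rfl | rfl
      exacts [absurd hx (Set.disjoint_left.1 hKL ha), rfl]
    exact hbetween.subset ⟨a, b, hab, ha, hxb ▸ hx⟩

theorem contractSetoid_edgesWithin_iUnion {ι : Type*} {K : ι → Set V} (hK : ∀ i, G.IsClique (K i))
    (hbetween : ∀ i j, i ≠ j → G.edgesBetween (K i) (K j) = ∅) :
    G.contractSetoid (G.edgesWithin (⋃ i, K i)) = ⨆ i, collapse (K i) := by
  apply le_antisymm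
  · refine G.contractSetoid_le_iff.2 fun e he a ha b hb => ?_
    obtain ⟨i, hai⟩ := Set.mem_iUnion.1 (he a ha)
    obtain ⟨j, hbj⟩ := Set.mem_iUnion.1 (he b hb)
    by_cases hab : a = b
    · exact hab ▸ Setoid.refl' _ a
    have hij : i = j := by_contra fun hij =>
      (hbetween i j hij).subset ⟨a, b, (Sym2.mem_and_mem_iff hab).1 ⟨ha, hb⟩, hai, hbj⟩
    exact collapse_le_iff.1 (le_iSup (fun i => collapse (K i)) i) a hai b (hij ▸ hbj)
  · refine iSup_le fun i => collapse_le_iff.2 fun a ha b hb => ?_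
    by_cases hab : a = b
    · exact hab ▸ Setoid.refl' _ a
    obtain ⟨e, he, -⟩ := (hK i).1 a ha b hb hab
    refine .single ⟨e, fun v hv => Set.mem_iUnion.2 ⟨i, ?_⟩, he⟩
    rcases Sym2.mem_iff.1 (he ▸ hv) with rfl | rfl
    exacts [ha, hb]

open Classical in
theorem card_isSpanningTreeMod_eq_prod_mul_sum [Finite V] [Fintype E] {ι : Type*} {K : ι → Set V}
    {s : Setoid V} {P : Set E} (hK : ∀ i, G.IsClique (K i)) (hne : ∀ i, (K i).Nonempty)
    (hatt : ∀ i, G.SimplyAttached (K i)) (hdisj : ∀ i j, i ≠ j → Disjoint (K i) (K j))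
    (hbetween : ∀ i j, i ≠ j → G.edgesBetween (K i) (K j) = ∅) (hs : ∀ i, s ≤ collapse (K i)ᶜ)
    (hP : ∀ i, Disjoint P (G.edgesWithin (K i))) (I : Finset ι) :
    (#{T | G.IsSpanningTreeMod s T ∧ P ⊆ T} : ℚ) =
      (∏ i ∈ I, ((K i).ncard : ℚ) ^ (((K i).ncard : ℤ) - 2)) *
        ∑ T with G.IsSpanningTreeMod (s ⊔ I.sup fun i => collapse (K i)) T ∧
            P \ (⋃ i ∈ I, G.edgeBoundary (K i)) ⊆ T,
          ∏ i ∈ I, ((K i).ncard : ℚ) ^ (-((G.edgeBoundary (K i) \ T).ncard : ℤ)) *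
            (1 + ((K i).ncard : ℚ)) ^ ((G.edgeBoundary (K i) \ P) \ T).ncard := by
  induction I using Finset.induction_on with
  | empty => simp
  | insert j I hj ih =>
    have hij : ∀ i ∈ I, i ≠ j := fun i hi => ne_of_mem_of_not_mem hi hj
    have h_isolated : s ⊔ I.sup (fun i => collapse (K i)) ≤ collapse (K j)ᶜ :=
      sup_le (hs j) <| Finset.sup_le fun i hi =>
        collapse_mono (Set.subset_compl_iff_disjoint_right.2 (hdisj i j (hij i hi)))
    have h_boundary : ∀ i ∈ I, Disjoint (G.edgeBoundary (K i))
        (G.edgesWithin (K j) ∪ G.edgeBoundary (K j)) := fun i hi =>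
      disjoint_edgeBoundary_of_edgesBetween_eq_empty (hdisj i j (hij i hi))
        (hbetween i j (hij i hi))
    rw [ih, (hK j).sum_isSpanningTreeMod (hne j) (hatt j) h_isolated
      ((hP j).mono_left Set.sdiff_subset), prod_insert hj, ← mul_assoc, mul_comm (_ ^ _)]
    · have h_sup : s ⊔ I.sup (fun i => collapse (K i)) ⊔ collapse (K j) =
          s ⊔ (insert j I).sup fun i => collapse (K i) := by
        rw [sup_insert, sup_assoc, sup_comm (I.sup _)]
      have h_required : (P \ ⋃ i ∈ I, G.edgeBoundary (K i)) \ G.edgeBoundary (K j) =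
          P \ ⋃ i ∈ insert j I, G.edgeBoundary (K i) := by
        rw [set_biUnion_insert, Set.sdiff_sdiff, Set.union_comm]
      have h_free : G.edgeBoundary (K j) \ (P \ ⋃ i ∈ I, G.edgeBoundary (K i)) =
          G.edgeBoundary (K j) \ P := by
        have : Disjoint (⋃ i ∈ I, G.edgeBoundary (K i)) (G.edgeBoundary (K j)) :=
          Set.disjoint_iUnion₂_left.2 fun i hi =>
            (h_boundary i hi).mono_right Set.subset_union_right
        grind
      simp only [h_sup, h_required, h_free, prod_insert hj, mul_comm]
    · intro F hF W
      refine prod_congr rfl fun i hi => ?_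
      have h_avoid : ∀ A ⊆ G.edgeBoundary (K i), A \ (F ∪ W) = A \ W := fun A hA => by
        rw [← Set.sdiff_sdiff, ((h_boundary i hi).mono hA hF).sdiff_eq_left]
      rw [h_avoid _ subset_rfl, h_avoid _ Set.sdiff_subset]

end CliqueFamilies

section Contraction

variable {V : Type*} {E : Type*} {G : Multigraph V E}

theorem StarComponents.simplyAttached {M : Set E} {C K : Set V} (hstar : G.StarComponents M C)
    (hK : G.edgeBoundary K ⊆ M) (hKC : Disjoint K C) : G.SimplyAttached K := by
  rintro a ha e ⟨he, hae⟩ f ⟨hf, haf⟩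
  obtain ⟨w, hw, hcenter⟩ := hstar e (hK he)
  have conn_f : G.EdgeConn M e f := ⟨a, a, hae, haf, .refl⟩
  obtain ⟨hwe, -⟩ := hcenter e (hK he) ⟨a, a, hae, hae, .refl⟩
  obtain ⟨hwf, -, unique_f⟩ := hcenter f (hK hf) conn_f
  have haw : a ≠ w := fun h => Set.disjoint_left.1 hKC ha (h ▸ hw)
  refine unique_f e (hK he) ⟨a, a, hae, hae, .refl⟩ ?_
  rw [(Sym2.mem_and_mem_iff haw).1 ⟨hae, hwe⟩, (Sym2.mem_and_mem_iff haw).1 ⟨haf, hwf⟩]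

theorem connectedOn_contract_iff {W : Set E} {T : Set {e // e ∉ W}} :
    (G.contract W).ConnectedOn T ↔
      G.contractSetoid W ⊔ G.contractSetoid (Subtype.val '' T) = ⊤ := by
  rw [Setoid.eq_top_iff]
  constructor
  · intro hconn a b
    have h_le : (G.contract W).contractSetoid T ≤ Setoid.ker (Quotient.map'
        (s₂ := G.contractSetoid W ⊔ G.contractSetoid (Subtype.val '' T)) id
        fun _ _ h => (le_sup_left : G.contractSetoid W ≤ _) h) := by
      refine contractSetoid_le_iff _ |>.2 fun e he x hx y hy => ?_
      obtain ⟨a, ha, rfl⟩ := Sym2.mem_map.1 hx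
      obtain ⟨b, hb, rfl⟩ := Sym2.mem_map.1 hy
      have hab := G.contractSetoid_apply_of_mem (Set.mem_image_of_mem Subtype.val he) ha hb
      exact Quotient.sound ((le_sup_right : G.contractSetoid (Subtype.val '' T) ≤ _) hab)
    exact Quotient.exact (h_le (hconn ⟦a⟧ ⟦b⟧))
  · intro htop x y
    induction x, y using Quotient.inductionOn₂ with | h a b
    have h_le : G.contractSetoid W ⊔ G.contractSetoid (Subtype.val '' T) ≤
        ((G.contract W).contractSetoid T).comap (Quotient.mk _) := by
      refine sup_le (fun x y hxy => ?_) (G.contractSetoid_le_iff.2 ?_)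
      · rw [Setoid.comap_rel, Quotient.sound hxy]
      · rintro _ ⟨e, he, rfl⟩ x hx y hy
        exact contractSetoid_apply_of_mem _ he (Sym2.mem_map.2 ⟨x, hx, rfl⟩)
          (Sym2.mem_map.2 ⟨y, hy, rfl⟩)
    exact h_le (htop a b)

theorem isSpanningTree_contract_iff {W : Set E} {T : Set {e // e ∉ W}} :
    (G.contract W).IsSpanningTree T ↔
      G.IsSpanningTreeMod (G.contractSetoid W) (Subtype.val '' T) := by
  rw [IsSpanningTree, IsSpanningTreeMod, connectedOn_contract_iff,
    Set.ncard_image_of_injective T Subtype.val_injective]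

open Classical in
theorem tau_eq_card [Fintype E] (P : Set E) : G.tau P = #{T | G.IsSpanningTreeMod ⊥ T ∧ P ⊆ T} := by
  simp only [isSpanningTreeMod_bot, ← Set.ncard_coe_finset, coe_filter_univ]
  rfl

variable [Finite V]

theorem image_ST_contract [Finite E] {W N : Set E} (hN : Disjoint N W) :
    Set.image Subtype.val '' (G.contract W).ST (Subtype.val ⁻¹' N) =
      {T | G.IsSpanningTreeMod (G.contractSetoid W) T ∧ N ⊆ T} := by
  ext T
  constructor
  · rintro ⟨T, ⟨hT, hNT⟩, rfl⟩
    refine ⟨isSpanningTree_contract_iff.1 hT, fun e he => ?_⟩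
    exact ⟨⟨e, hN.notMem_of_mem_left he⟩, hNT he, rfl⟩
  · rintro ⟨hT, hNT⟩
    have hTW : T ⊆ Set.range (Subtype.val : {e // e ∉ W} → E) := fun e he =>
      ⟨⟨e, fun heW => hT.not_contractSetoid_le he
        (G.contractSetoid_mono (Set.singleton_subset_iff.2 heW))⟩, rfl⟩
    have h_image := Set.image_preimage_eq_of_subset hTW
    have hT' : (G.contract W).IsSpanningTree (Subtype.val ⁻¹' T) :=
      isSpanningTree_contract_iff.2 (h_image.symm ▸ hT)
    exact ⟨_, ⟨hT', Set.preimage_mono hNT⟩, h_image⟩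

open Classical in
theorem finsum_mem_ST_contract [Fintype E] {A : Type*} [AddCommMonoid A] {W N : Set E}
    (hN : Disjoint N W) (f : Set E → A) :
    ∑ᶠ T ∈ (G.contract W).ST (Subtype.val ⁻¹' N), f (Subtype.val '' T) =
      ∑ T with G.IsSpanningTreeMod (G.contractSetoid W) T ∧ N ⊆ T, f T := by
  rw [← finsum_mem_image (f := f) (Set.image_injective.2 Subtype.val_injective).injOn,
    image_ST_contract hN, ← finsum_mem_coe_finset, coe_filter_univ]

end Contraction

section CliqueContractionFormula

variable {V : Type*} {E : Type*} {G : Multigraph V E}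

theorem tau_eq_prod_mul_finsum_contract [Finite V] [Finite E] {ι : Type*} [Fintype ι]
    {K : ι → Set V} {P : Set E} (hK : ∀ i, G.IsClique (K i)) (hne : ∀ i, (K i).Nonempty)
    (hatt : ∀ i, G.SimplyAttached (K i)) (hdisj : ∀ i j, i ≠ j → Disjoint (K i) (K j))
    (hbetween : ∀ i j, i ≠ j → G.edgesBetween (K i) (K j) = ∅)
    (hP : Disjoint P (G.edgesWithin (⋃ i, K i))) :
    (G.tau P : ℚ) = (∏ i, ((K i).ncard : ℚ) ^ (((K i).ncard : ℤ) - 2)) *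
      ∑ᶠ T ∈ (G.contract (G.edgesWithin (⋃ i, K i))).ST
          (Subtype.val ⁻¹' (P \ ⋃ i, G.edgeBoundary (K i))),
        ∏ i, ((K i).ncard : ℚ) ^ (-((G.edgeBoundary (K i) \ Subtype.val '' T).ncard : ℤ)) *
          (1 + ((K i).ncard : ℚ)) ^ ((G.edgeBoundary (K i) \ P) \ Subtype.val '' T).ncard := by
  classical
  cases nonempty_fintype E
  have hP_within : ∀ i, Disjoint P (G.edgesWithin (K i)) := fun i =>
    hP.mono_right fun _ he v hv => Set.mem_iUnion_of_mem i (he v hv)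
  rw [tau_eq_card, card_isSpanningTreeMod_eq_prod_mul_sum hK hne hatt hdisj hbetween
    (fun _ => bot_le) hP_within univ, bot_sup_eq, sup_univ_eq_iSup,
    ← contractSetoid_edgesWithin_iUnion hK hbetween]
  simp only [mem_univ, Set.iUnion_true]
  rw [← finsum_mem_ST_contract (hP.mono_left Set.sdiff_subset)]

end CliqueContractionFormula

section Partition

variable {V : Type*} {E : Type*} {G : Multigraph V E}

theorem disjoint_edgesWithin_compl (K : Set V) :
    Disjoint (G.edgesWithin Kᶜ) (G.edgesWithin K ∪ G.edgeBoundary K) := by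
  refine Set.disjoint_left.2 ?_
  rintro e hout (hin | ⟨a, b, hab, ha, -⟩)
  · exact hout _ (Sym2.out_fst_mem _) (hin _ (Sym2.out_fst_mem _))
  · exact hout a (hab ▸ Sym2.mem_mk_left a b) ha

variable {ι : Type*} {part : V → Option ι}

theorem edgesBetween_preimage_none (hbetween : ∀ i j, i ≠ j →
      G.edgesBetween (part ⁻¹' {some i}) (part ⁻¹' {some j}) = ∅) (i : ι) :
    G.edgesBetween (part ⁻¹' {some i}) (part ⁻¹' {none}) = G.edgeBoundary (part ⁻¹' {some i}) := by
  ext e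
  constructor
  · rintro ⟨a, b, hab, ha, hb⟩
    exact ⟨a, b, hab, ha, by simp_all⟩
  · rintro ⟨a, b, hab, ha, hb⟩
    refine ⟨a, b, hab, ha, ?_⟩
    cases hj : part b with
    | none => exact hj
    | some j =>
      have hij : i ≠ j := by rintro rfl; exact hb hj
      exact ((hbetween i j hij).subset ⟨a, b, hab, ha, hj⟩).elim

theorem iUnion_edgesBetween_preimage_none :
    ⋃ i, G.edgesBetween (part ⁻¹' {some i}) (part ⁻¹' {none}) =
      G.edgeBoundary (⋃ i, part ⁻¹' {some i}) := by
  have compl_eq : (⋃ i, part ⁻¹' {some i})ᶜ = part ⁻¹' {none} := by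
    ext v
    cases hv : part v <;> simp [hv]
  rw [edgeBoundary, compl_eq]
  ext e
  simp only [edgesBetween, Set.mem_iUnion, Set.mem_ofPred_eq]
  grind

end Partition

end Multigraph

/-- in the setting of disjoint cliques `V₁, …, V_k` joined to
`V₀` by stars, for any `R ⊆ M` and `N ⊆ E(G − U)`:
`τ_G(R ∪ N) = ∏ᵢ |Vᵢ|^{|Vᵢ|−2} · Σ_{T ∈ ST_{G•U}(N)} ∏ᵢ
  |Vᵢ|^{−|Mᵢ−E(T)|} (1+|Vᵢ|)^{|(Mᵢ−R)−E(T)|}`. -/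
theorem tau_contract_cliques_subset {V : Type u} {E : Type v} [Fintype V] [Fintype E]
    (G : Multigraph V E) (hconn : G.Connected) (hloop : G.Loopless)
    (k : ℕ) (part : V → Option (Fin k))
    (hne : ∀ i : Option (Fin k), (part ⁻¹' {i}).Nonempty)
    (hclique : ∀ i : Fin k, G.IsClique (part ⁻¹' {some i}))
    (hbetween : ∀ i j : Fin k, i ≠ j →
      G.edgesBetween (part ⁻¹' {some i}) (part ⁻¹' {some j}) = ∅)
    (Mi : Fin k → Set E)
    (hMi : ∀ i, Mi i = G.edgesBetween (part ⁻¹' {some i}) (part ⁻¹' {none}))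
    (M : Set E) (hM : M = ⋃ i, Mi i)
    (hstar : G.StarComponents M (part ⁻¹' {none}))
    (U : Set V) (hU : U = ⋃ i, part ⁻¹' {some i})
    (rep : Fin k → V) (hrep : ∀ i, rep i ∈ part ⁻¹' {some i})
    (R : Set E) (hR : R ⊆ M)
    (N : Set E) (hN : N ⊆ G.edgesWithin Uᶜ) :
    (G.tau (R ∪ N) : ℚ) =
      (∏ i, ((part ⁻¹' {some i}).ncard : ℚ) ^
        (((part ⁻¹' {some i}).ncard : ℤ) - 2)) *
      ∑ᶠ T ∈ (G.contract (G.edgesWithin U)).ST (Subtype.val ⁻¹' N),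
        ∏ i, ((part ⁻¹' {some i}).ncard : ℚ) ^
            (-(((Mi i \ (Subtype.val '' T)).ncard : ℤ))) *
          (1 + ((part ⁻¹' {some i}).ncard : ℚ)) ^
            (((Mi i \ R) \ (Subtype.val '' T)).ncard) := by
  subst hU
  have hM_eq : M = G.edgeBoundary (⋃ i, part ⁻¹' {some i}) := by
    simp only [hM, hMi, iUnion_edgesBetween_preimage_none]
  obtain rfl : Mi = fun i => G.edgeBoundary (part ⁻¹' {some i}) := funext fun i =>
    (hMi i).trans (edgesBetween_preimage_none hbetween i)
  have hMi_sub : ∀ i, G.edgeBoundary (part ⁻¹' {some i}) ⊆ M := fun i =>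
    hM ▸ Set.subset_iUnion_of_subset i subset_rfl
  have hdisj : ∀ i j, i ≠ j → Disjoint (part ⁻¹' {i}) (part ⁻¹' {j}) := fun i j hij =>
    Disjoint.preimage part (Set.disjoint_singleton.2 hij)
  obtain ⟨hNU, hNM⟩ : Disjoint N (G.edgesWithin (⋃ i, part ⁻¹' {some i})) ∧ Disjoint N M := by
    rw [hM_eq, ← Set.disjoint_union_right]
    exact (disjoint_edgesWithin_compl _).mono_left hN
  have hRU : Disjoint R (G.edgesWithin (⋃ i, part ⁻¹' {some i})) :=
    (G.disjoint_edgeBoundary_edgesWithin _).mono_left (hM_eq ▸ hR)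
  have required_eq : (R ∪ N) \ M = N := by grind
  have free_eq : ∀ i, G.edgeBoundary (part ⁻¹' {some i}) \ (R ∪ N) =
      G.edgeBoundary (part ⁻¹' {some i}) \ R := by grind
  rw [tau_eq_prod_mul_finsum_contract hclique (fun i => hne (some i))
    (fun i => hstar.simplyAttached (hMi_sub i) (hdisj _ _ nofun))
    (fun i j hij => hdisj _ _ (by simpa)) hbetween (hRU.union_left hNU)]
  simp only [← hM, required_eq, free_eq]

end PaperST
end
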